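/- arXiv:math/0504455 — 4 statements merged into one kernel-verified Lean document; each statement's English description precedes it below -/
import Mathlib

section
/- Let c, M, T > 0 and x₀ < x₁. Let u : [x₀,x₁] × [0,T] → ℝ be infinitely differentiable, satisfying the heat equation u_t = u_{xx}/(4c) pointwise and |u(x,t)| < M everywhere. Then for every x ∈ (x₀,x₁) and every t ∈ (0,T], setting d = min(x − x₀, x₁ − x) and N = M / erf(√c · d/(2√t)), one has for every z ∈ ℝ with erf(z) = u(x,t)/N the gradient bound u_x(x,t) ≤ 2N · √(c/(πt)) · exp(−z²). -/
/-- The error function `erf s = (2/√π) ∫₀ˢ exp(−y²) dy`. -/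
noncomputable def erf (s : ℝ) : ℝ :=
  (2 / Real.sqrt Real.pi) * ∫ y in (0:ℝ)..s, Real.exp (-(y ^ 2))

/-!
The functions `N erf (√(c / (s - τ)) (y - a))` solve the same heat equation and start at time `τ`
from a step of height `±N` at `a`. With `N` as in the theorem and `a` chosen so that the step
solution agrees with `u` at `(x, t)`, it lies below `-M` on the left side and above `M` on the right
side of a rectangle around `x`, and if it starts shortly before the rectangle does, it is so steep
there that it crosses `u` only once. The number of crossings cannot increase in time (a maximum
principle for the product of the positive part of `w` at `p` and its negative part at `q`, over
`p ≤ q`, where `w` is the difference of the solutions), so at time `t` the step solution still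
crosses `u` upwards at `x`, and `u_x` is at most its slope there. No regularity at time `0` is
involved, because the rectangle may start at any positive time.
-/

open Set Filter Topology

section ErrorFunction

/-- The derivative `(2/√π) exp(-s²)` of the error function. -/
noncomputable def erfDeriv (s : ℝ) : ℝ := 2 / √Real.pi * Real.exp (-(s ^ 2))

theorem erfDeriv_pos (s : ℝ) : 0 < erfDeriv s := by
  unfold erfDeriv; positivity

theorem erfDeriv_le_erfDeriv {s k : ℝ} (h : |s| ≤ |k|) : erfDeriv k ≤ erfDeriv s := by
  unfold erfDeriv
  gcongr ?_ * Real.exp (-?_)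
  exact sq_le_sq.2 h

theorem hasDerivAt_erf (s : ℝ) : HasDerivAt erf (erfDeriv s) s := by
  have hcont : Continuous fun y : ℝ => Real.exp (-(y ^ 2)) := by fun_prop
  exact (hcont.integral_hasStrictDerivAt 0 s).hasDerivAt.const_mul _

theorem hasDerivAt_erfDeriv (s : ℝ) : HasDerivAt erfDeriv (-2 * s * erfDeriv s) s := by
  refine (((hasDerivAt_pow 2 s).fun_neg.exp).const_mul (2 / √Real.pi)).congr_deriv ?_
  simp only [erfDeriv]
  push_cast
  ring

theorem continuous_erf : Continuous erf :=
  continuous_iff_continuousAt.2 fun s => (hasDerivAt_erf s).continuousAt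

theorem strictMono_erf : StrictMono erf :=
  strictMono_of_hasDerivAt_pos hasDerivAt_erf erfDeriv_pos

theorem erf_zero : erf 0 = 0 := by simp [erf]

theorem erf_neg (s : ℝ) : erf (-s) = -erf s := by
  have h := intervalIntegral.integral_comp_neg (a := 0) (b := s)
    (fun y : ℝ => Real.exp (-(y ^ 2)))
  simp only [neg_sq, neg_zero] at h
  rw [erf, erf, h, intervalIntegral.integral_symm]
  ring

theorem erf_pos {s : ℝ} (hs : 0 < s) : 0 < erf s :=
  erf_zero ▸ strictMono_erf hs

theorem abs_erf_le_erf_iff {s k : ℝ} : |erf s| ≤ erf k ↔ |s| ≤ k := by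
  rw [abs_le, abs_le, ← erf_neg, strictMono_erf.le_iff_le, strictMono_erf.le_iff_le]

theorem const_mul_erf_le_neg {N s k : ℝ} (hN : 0 ≤ N) (h : s ≤ -k) : N * erf s ≤ -(N * erf k) := by
  rw [← mul_neg, ← erf_neg]
  exact mul_le_mul_of_nonneg_left (strictMono_erf.monotone h) hN

theorem hasDerivAt_const_mul_erf (N l a y : ℝ) :
    HasDerivAt (fun y => N * erf (l * (y - a))) (N * (erfDeriv (l * (y - a)) * l)) y := by
  have hlin : HasDerivAt (fun y => l * (y - a)) l y := by
    simpa using ((hasDerivAt_id y).sub_const a).const_mul l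
  exact ((hasDerivAt_erf _).comp y hlin).const_mul N

end ErrorFunction

section DerivativeTests

theorem second_deriv_nonpos_of_isLocalMax {f f' : ℝ → ℝ} {f'' x : ℝ} (hmax : IsLocalMax f x)
    (hf : ∀ᶠ y in 𝓝 x, HasDerivAt f (f' y) y) (hf' : HasDerivAt f' f'' x) : f'' ≤ 0 := by
  by_contra! hpos
  have hsecond : deriv (deriv f) x = f'' :=
    EventuallyEq.deriv_eq (hf.mono fun y hy => hy.deriv) |>.trans hf'.deriv
  have hmin : IsLocalMin f x :=
    isLocalMin_of_deriv_deriv_pos (hsecond ▸ hpos) hmax.deriv_eq_zero hf.self_of_nhds.continuousAt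
  have hconst : f =ᶠ[𝓝 x] fun _ => f x := by
    filter_upwards [hmax, hmin] with y h₁ h₂ using le_antisymm h₁ h₂
  have hzero : deriv (deriv f) x = 0 := by simpa using hconst.deriv.deriv_eq
  exact hpos.ne' (hsecond ▸ hzero)

theorem second_deriv_nonneg_of_isLocalMin {f f' : ℝ → ℝ} {f'' x : ℝ} (hmin : IsLocalMin f x)
    (hf : ∀ᶠ y in 𝓝 x, HasDerivAt f (f' y) y) (hf' : HasDerivAt f' f'' x) : 0 ≤ f'' :=
  neg_nonpos.1 <| second_deriv_nonpos_of_isLocalMax hmin.neg (hf.mono fun _ hy => hy.fun_neg)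
    hf'.fun_neg

theorem deriv_nonneg_of_isLocalMaxOn_Ioc {f : ℝ → ℝ} {f' a b : ℝ} (hab : a < b)
    (hmax : IsLocalMaxOn f (Ioc a b) b) (hf : HasDerivWithinAt f f' (Ioc a b) b) : 0 ≤ f' := by
  obtain ⟨m, ham, hmb⟩ := exists_between hab
  have hcone : m - b ∈ posTangentConeAt (Ioc a b) b :=
    sub_mem_posTangentConeAt_of_segment_subset <|
      (convex_Ioc a b).segment_subset ⟨hab, le_rfl⟩ ⟨ham, hmb.le⟩
  have h : (m - b) * f' ≤ 0 := by
    simpa using hmax.hasFDerivWithinAt_nonpos hf.hasFDerivWithinAt hcone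
  exact nonneg_of_mul_nonpos_right h (sub_neg.2 hmb)

end DerivativeTests

section SingleCrossing

/-- `f` is (weakly) single crossing on `s`: moving to the right, it never passes from positive to
negative values. Zeros, even intervals of them, are allowed. -/
def SingleCrossingOn (f : ℝ → ℝ) (s : Set ℝ) : Prop :=
  ∀ ⦃p⦄, p ∈ s → ∀ ⦃q⦄, q ∈ s → p < q → 0 < f p → 0 ≤ f q

theorem singleCrossingOn_of_monotoneOn_Icc {f : ℝ → ℝ} {s : Set ℝ} {a b : ℝ}
    (hleft : ∀ y ∈ s, y ≤ a → f y ≤ 0) (hright : ∀ y ∈ s, b ≤ y → 0 ≤ f y)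
    (hmono : MonotoneOn f (s ∩ Icc a b)) : SingleCrossingOn f s := by
  intro p hp q hq hpq hfp
  rcases le_total b q with hbq | hqb
  · exact hright q hq hbq
  · have hap : a < p := lt_of_not_ge fun hpa => hfp.not_ge (hleft p hp hpa)
    have hpI : p ∈ Icc a b := ⟨hap.le, hpq.le.trans hqb⟩
    have hqI : q ∈ Icc a b := ⟨(hap.trans hpq).le, hqb⟩
    exact hfp.le.trans (hmono ⟨hp, hpI⟩ ⟨hq, hqI⟩ hpq.le)

theorem SingleCrossingOn.deriv_nonneg {f : ℝ → ℝ} {f' x : ℝ} {s : Set ℝ}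
    (hf : SingleCrossingOn f s) (hs : s ∈ 𝓝 x) (hx : f x = 0) (hd : HasDerivAt f f' x) :
    0 ≤ f' := by
  by_contra! hneg
  have hsign := eventually_nhdsWithin_sign_eq_of_deriv_neg (hd.deriv.trans_lt hneg) hx
  have hev := hsign.and hs
  obtain ⟨p, ⟨hp, hps⟩, hpx⟩ := ((hev.filter_mono nhdsWithin_le_nhds).and
    (self_mem_nhdsWithin : Iio x ∈ 𝓝[<] x)).exists
  obtain ⟨q, ⟨hq, hqs⟩, hxq⟩ := ((hev.filter_mono nhdsWithin_le_nhds).and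
    (self_mem_nhdsWithin : Ioi x ∈ 𝓝[>] x)).exists
  rw [sign_pos (sub_pos.2 hpx), sign_eq_one_iff] at hp
  rw [sign_neg (sub_neg.2 hxq), sign_eq_neg_one_iff] at hq
  exact hq.not_ge (hf hps hqs (hpx.trans hxq) hp)

theorem eventually_singleCrossingOn_const_mul_erf_sub {f f' : ℝ → ℝ} {s : Set ℝ} {N k C : ℝ}
    (hs : Convex ℝ s) (hN : 0 < N) (hf : ∀ y ∈ s, HasDerivWithinAt f (f' y) s y)
    (hf' : ∀ y ∈ s, f' y ≤ C) (hbdd : ∀ y ∈ s, |f y| ≤ N * erf k) :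
    ∀ᶠ l in atTop, ∀ a, SingleCrossingOn (fun y => N * erf (l * (y - a)) - f y) s := by
  have hsteep : ∀ᶠ l in atTop, C ≤ N * (erfDeriv k * l) :=
    ((tendsto_id.const_mul_atTop (erfDeriv_pos k)).const_mul_atTop hN).eventually_ge_atTop C
  filter_upwards [hsteep, eventually_gt_atTop 0] with l hsteep hl a
  refine singleCrossingOn_of_monotoneOn_Icc (a := a - k / l) (b := a + k / l) ?_ ?_ ?_
  · intro y hy hya
    have harg : l * (y - a) ≤ -k := by
      rw [le_sub_comm, div_le_iff₀ hl] at hya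
      linarith
    linarith [const_mul_erf_le_neg hN.le harg, (abs_le.1 (hbdd y hy)).1]
  · intro y hy hay
    have harg : k ≤ l * (y - a) := by
      rw [← le_sub_iff_add_le', div_le_iff₀ hl] at hay
      linarith
    have herf := mul_le_mul_of_nonneg_left (strictMono_erf.monotone harg) hN.le
    linarith [(abs_le.1 (hbdd y hy)).2]
  · have hderiv : ∀ y ∈ s, HasDerivWithinAt (fun y => N * erf (l * (y - a)) - f y)
        (N * (erfDeriv (l * (y - a)) * l) - f' y) s y := fun y hy =>
      (hasDerivAt_const_mul_erf N l a y).hasDerivWithinAt.fun_sub (hf y hy)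
    refine monotoneOn_of_hasDerivWithinAt_nonneg (hs.inter (convex_Icc _ _))
      (fun y hy => (hderiv y hy.1).continuousWithinAt.mono inter_subset_left)
      (fun y hy => (hderiv y (interior_subset hy).1).mono
        (interior_subset.trans inter_subset_left)) fun y hy => ?_
    obtain ⟨hys, hya, hay⟩ := interior_subset hy
    have harg : |l * (y - a)| ≤ k := by
      rw [abs_mul, abs_of_pos hl, ← le_div_iff₀' hl, abs_le]
      constructor <;> linarith
    have hslope : erfDeriv k ≤ erfDeriv (l * (y - a)) :=
      erfDeriv_le_erfDeriv (harg.trans (le_abs_self k))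
    refine sub_nonneg.2 ((hf' y hys).trans (hsteep.trans ?_))
    gcongr

end SingleCrossing

section HeatEquation

/-- `u` is a classical solution of the heat equation `u_t = κ u_xx` on `I × J` with space
derivative `ux`. The time derivative is one-sided at the endpoints of `J` that belong to `J`. -/
structure IsHeatSolutionOn (κ : ℝ) (I J : Set ℝ) (u ux : ℝ → ℝ → ℝ) : Prop where
  hasDerivAt : ∀ x ∈ I, ∀ t ∈ J, HasDerivAt (fun y => u y t) (ux x t) x
  exists_second_deriv : ∀ x ∈ I, ∀ t ∈ J, ∃ uxx, HasDerivAt (fun y => ux y t) uxx x ∧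
    HasDerivWithinAt (fun s => u x s) (κ * uxx) J t

variable {κ a b t₀ t₁ : ℝ} {I I' J J' : Set ℝ} {u v w ux vx wx : ℝ → ℝ → ℝ}

theorem IsHeatSolutionOn.mono (hu : IsHeatSolutionOn κ I J u ux) (hI : I' ⊆ I) (hJ : J' ⊆ J) :
    IsHeatSolutionOn κ I' J' u ux where
  hasDerivAt x hx t ht := hu.hasDerivAt x (hI hx) t (hJ ht)
  exists_second_deriv x hx t ht :=
    have ⟨uxx, hxx, ht⟩ := hu.exists_second_deriv x (hI hx) t (hJ ht)
    ⟨uxx, hxx, ht.mono hJ⟩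

theorem IsHeatSolutionOn.sub (hu : IsHeatSolutionOn κ I J u ux)
    (hv : IsHeatSolutionOn κ I J v vx) :
    IsHeatSolutionOn κ I J (fun y s => u y s - v y s) fun y s => ux y s - vx y s where
  hasDerivAt x hx t ht := (hu.hasDerivAt x hx t ht).fun_sub (hv.hasDerivAt x hx t ht)
  exists_second_deriv x hx t ht :=
    have ⟨uxx, huxx, hut⟩ := hu.exists_second_deriv x hx t ht
    have ⟨vxx, hvxx, hvt⟩ := hv.exists_second_deriv x hx t ht
    ⟨uxx - vxx, huxx.fun_sub hvxx, mul_sub κ uxx vxx ▸ hut.fun_sub hvt⟩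

/-- Measures how far `w` at time `s` is from being single crossing: it is positive exactly when
`w p s` is positive and `w q s` is negative. The factor `exp (-s)` makes it decrease strictly along
solutions of the heat equation at spatial maxima. -/
noncomputable def crossingDefect (w : ℝ → ℝ → ℝ) (z : ℝ × ℝ × ℝ) : ℝ :=
  (w z.1 z.2.2)⁺ * (w z.2.1 z.2.2)⁻ * Real.exp (-z.2.2)

/-- The triples `(p, q, s)` with `p ≤ q` in `[a, b]` and `s` in `[t₀, t₁]`, over which
`crossingDefect` is maximized. -/
def crossingRegion (a b t₀ t₁ : ℝ) : Set (ℝ × ℝ × ℝ) :=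
  (Icc a b ×ˢ Icc a b ×ˢ Icc t₀ t₁) ∩ {z | z.1 ≤ z.2.1}

theorem crossingDefect_of_pos_of_neg {p q s : ℝ} (hp : 0 < w p s) (hq : w q s < 0) :
    crossingDefect w (p, q, s) = w p s * -w q s * Real.exp (-s) := by
  rw [crossingDefect, posPart_eq_self.2 hp.le, negPart_eq_neg.2 hq.le]

theorem crossingDefect_pos_iff {p q s : ℝ} :
    0 < crossingDefect w (p, q, s) ↔ 0 < w p s ∧ w q s < 0 := by
  refine ⟨fun h => ?_, fun ⟨hp, hq⟩ => ?_⟩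
  · have hprod := pos_of_mul_pos_left h (Real.exp_pos _).le
    exact ⟨posPart_pos_iff.1 (pos_of_mul_pos_left hprod (negPart_nonneg _)),
      negPart_pos_iff.1 (pos_of_mul_pos_right hprod (posPart_nonneg _))⟩
  · exact mul_pos (mul_pos (posPart_pos hp) (negPart_pos hq)) (Real.exp_pos _)

theorem isCompact_crossingRegion : IsCompact (crossingRegion a b t₀ t₁) :=
  (isCompact_Icc.prod (isCompact_Icc.prod isCompact_Icc)).inter_right
    (isClosed_le continuous_fst (continuous_fst.comp continuous_snd))

theorem continuousOn_crossingDefect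
    (hw : ContinuousOn (fun z : ℝ × ℝ => w z.1 z.2) (Icc a b ×ˢ Icc t₀ t₁)) :
    ContinuousOn (crossingDefect w) (crossingRegion a b t₀ t₁) := by
  have hp : ContinuousOn (fun z : ℝ × ℝ × ℝ => w z.1 z.2.2) (crossingRegion a b t₀ t₁) :=
    hw.comp (f := fun z : ℝ × ℝ × ℝ => (z.1, z.2.2)) (by fun_prop) fun z hz =>
      ⟨hz.1.1, hz.1.2.2⟩
  have hq : ContinuousOn (fun z : ℝ × ℝ × ℝ => w z.2.1 z.2.2) (crossingRegion a b t₀ t₁) :=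
    hw.comp (f := fun z : ℝ × ℝ × ℝ => (z.2.1, z.2.2)) (by fun_prop) fun z hz =>
      ⟨hz.1.2.1, hz.1.2.2⟩
  exact ((continuous_posPart.comp_continuousOn hp).mul
    (continuous_negPart.comp_continuousOn hq)).mul (by fun_prop)

section Maximum

variable {p q s : ℝ}

theorem isLocalMax_of_isMaxOn_crossingDefect
    (hmax : IsMaxOn (crossingDefect w) (crossingRegion a b t₀ t₁) (p, q, s)) (hs : s ∈ Icc t₀ t₁)
    (hap : a < p) (hpq : p < q) (hqb : q ≤ b) (hp : 0 < w p s) (hq : w q s < 0) :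
    IsLocalMax (fun y => w y s) p := by
  filter_upwards [Ioo_mem_nhds hap hpq] with y ⟨hay, hyq⟩
  have hle : crossingDefect w (y, q, s) ≤ crossingDefect w (p, q, s) :=
    hmax ⟨⟨⟨hay.le, hyq.le.trans hqb⟩, ⟨(hap.trans hpq).le, hqb⟩, hs⟩, hyq.le⟩
  have hpos : (w y s)⁺ ≤ (w p s)⁺ :=
    le_of_mul_le_mul_right (le_of_mul_le_mul_right hle (Real.exp_pos _)) (negPart_pos hq)
  exact (le_posPart _).trans (hpos.trans_eq (posPart_eq_self.2 hp.le))

theorem isLocalMin_of_isMaxOn_crossingDefect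
    (hmax : IsMaxOn (crossingDefect w) (crossingRegion a b t₀ t₁) (p, q, s)) (hs : s ∈ Icc t₀ t₁)
    (hap : a ≤ p) (hpq : p < q) (hqb : q < b) (hp : 0 < w p s) (hq : w q s < 0) :
    IsLocalMin (fun y => w y s) q := by
  filter_upwards [Ioo_mem_nhds hpq hqb] with y ⟨hpy, hyb⟩
  have hle : crossingDefect w (p, y, s) ≤ crossingDefect w (p, q, s) :=
    hmax ⟨⟨⟨hap, (hpq.trans hqb).le⟩, ⟨hap.trans hpy.le, hyb.le⟩, hs⟩, hpy.le⟩
  have hneg : (w y s)⁻ ≤ (w q s)⁻ :=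
    le_of_mul_le_mul_left (le_of_mul_le_mul_right hle (Real.exp_pos _)) (posPart_pos hp)
  exact neg_le_neg_iff.1 ((neg_le_negPart _).trans (hneg.trans_eq (negPart_eq_neg.2 hq.le)))

theorem isLocalMaxOn_of_isMaxOn_crossingDefect
    (hmax : IsMaxOn (crossingDefect w) (crossingRegion a b t₀ t₁) (p, q, s)) (hs : s ≤ t₁)
    (hpI : p ∈ Icc a b) (hqI : q ∈ Icc a b) (hpq : p ≤ q)
    (hpc : ContinuousWithinAt (fun r => w p r) (Ioc t₀ s) s)
    (hqc : ContinuousWithinAt (fun r => w q r) (Ioc t₀ s) s) (hp : 0 < w p s) (hq : w q s < 0) :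
    IsLocalMaxOn (fun r => w p r * -w q r * Real.exp (-r)) (Ioc t₀ s) s := by
  filter_upwards [hpc.eventually (lt_mem_nhds hp), hqc.eventually (gt_mem_nhds hq),
    self_mem_nhdsWithin] with r hpr hqr hr
  rw [← crossingDefect_of_pos_of_neg hpr hqr, ← crossingDefect_of_pos_of_neg hp hq]
  exact hmax ⟨⟨hpI, hqI, hr.1.le, hr.2.trans hs⟩, hpq⟩

theorem IsHeatSolutionOn.not_isMaxOn_crossingDefect (hκ : 0 ≤ κ)
    (hw : IsHeatSolutionOn κ (Ioo a b) (Ioc t₀ t₁) w wx) (hap : a < p) (hpq : p < q)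
    (hqb : q < b) (hs : s ∈ Ioc t₀ t₁) (hp : 0 < w p s) (hq : w q s < 0) :
    ¬IsMaxOn (crossingDefect w) (crossingRegion a b t₀ t₁) (p, q, s) := by
  intro hmax
  have hpI : p ∈ Ioo a b := ⟨hap, hpq.trans hqb⟩
  have hqI : q ∈ Ioo a b := ⟨hap.trans hpq, hqb⟩
  have hsI := Ioc_subset_Icc_self hs
  have hspace : ∀ y ∈ Ioo a b, ∀ᶠ y' in 𝓝 y, HasDerivAt (fun y => w y s) (wx y' s) y' :=
    fun y hy => eventually_of_mem (Ioo_mem_nhds hy.1 hy.2) fun y' hy' => hw.hasDerivAt y' hy' s hs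
  obtain ⟨wxxp, hxxp, htp⟩ := hw.exists_second_deriv p hpI s hs
  obtain ⟨wxxq, hxxq, htq⟩ := hw.exists_second_deriv q hqI s hs
  replace htp := htp.mono (Ioc_subset_Ioc_right hs.2)
  replace htq := htq.mono (Ioc_subset_Ioc_right hs.2)
  have hwxxp : wxxp ≤ 0 := second_deriv_nonpos_of_isLocalMax
    (isLocalMax_of_isMaxOn_crossingDefect hmax hsI hap hpq hqb.le hp hq) (hspace p hpI) hxxp
  have hwxxq : 0 ≤ wxxq := second_deriv_nonneg_of_isLocalMin
    (isLocalMin_of_isMaxOn_crossingDefect hmax hsI hap.le hpq hqb hp hq) (hspace q hqI) hxxq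
  have hexp : HasDerivWithinAt (fun r : ℝ => Real.exp (-r)) (-Real.exp (-s)) (Ioc t₀ s) s := by
    simpa using ((hasDerivAt_id s).neg.exp).hasDerivWithinAt
  have htime := deriv_nonneg_of_isLocalMaxOn_Ioc hs.1
    (isLocalMaxOn_of_isMaxOn_crossingDefect hmax hs.2 (Ioo_subset_Icc_self hpI)
      (Ioo_subset_Icc_self hqI) hpq.le htp.continuousWithinAt htq.continuousWithinAt hp hq)
    ((htp.fun_mul htq.fun_neg).fun_mul hexp)
  have hp_decr : κ * wxxp * -w q s ≤ 0 :=
    mul_nonpos_of_nonpos_of_nonneg (mul_nonpos_of_nonneg_of_nonpos hκ hwxxp) (by linarith)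
  have hq_decr : w p s * -(κ * wxxq) ≤ 0 :=
    mul_nonpos_of_nonneg_of_nonpos hp.le (neg_nonpos.2 (mul_nonneg hκ hwxxq))
  have hprod : 0 < w p s * -w q s := mul_pos hp (neg_pos.2 hq)
  nlinarith [Real.exp_pos (-s)]

end Maximum

theorem IsHeatSolutionOn.singleCrossingOn (hκ : 0 ≤ κ)
    (hw : IsHeatSolutionOn κ (Ioo a b) (Ioc t₀ t₁) w wx)
    (hcont : ContinuousOn (fun z : ℝ × ℝ => w z.1 z.2) (Icc a b ×ˢ Icc t₀ t₁))
    (hleft : ∀ s ∈ Ioc t₀ t₁, w a s ≤ 0) (hright : ∀ s ∈ Ioc t₀ t₁, 0 ≤ w b s)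
    (hinit : SingleCrossingOn (fun y => w y t₀) (Icc a b)) {t : ℝ} (ht : t ∈ Icc t₀ t₁) :
    SingleCrossingOn (fun y => w y t) (Icc a b) := by
  intro p hp q hq hpq hwp
  by_contra! hwq
  have hmem : (p, q, t) ∈ crossingRegion a b t₀ t₁ := ⟨⟨hp, hq, ht⟩, hpq.le⟩
  obtain ⟨⟨P, Q, s⟩, hPQs, hmax⟩ :=
    isCompact_crossingRegion.exists_isMaxOn ⟨_, hmem⟩ (continuousOn_crossingDefect hcont)
  obtain ⟨⟨hP, hQ, hs⟩, hPQ⟩ : (P ∈ Icc a b ∧ Q ∈ Icc a b ∧ s ∈ Icc t₀ t₁) ∧ P ≤ Q := hPQs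
  obtain ⟨hwP, hwQ⟩ : 0 < w P s ∧ w Q s < 0 :=
    crossingDefect_pos_iff.1 ((crossingDefect_pos_iff.2 ⟨hwp, hwq⟩).trans_le (hmax hmem))
  have hPQ : P < Q := hPQ.lt_of_ne (by rintro rfl; exact lt_asymm hwP hwQ)
  have hs : s ∈ Ioc t₀ t₁ :=
    ⟨hs.1.lt_of_ne (by rintro rfl; exact hwQ.not_ge (hinit hP hQ hPQ hwP)), hs.2⟩
  have haP : a < P := hP.1.lt_of_ne (by rintro rfl; exact hwP.not_ge (hleft s hs))
  have hQb : Q < b := hQ.2.lt_of_ne (by rintro rfl; exact hwQ.not_ge (hright s hs))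
  exact hw.not_isMaxOn_crossingDefect hκ haP hPQ hQb hs hwP hwQ hmax

end HeatEquation

section StepSolution

/-- The solution of `u_t = u_xx / (4c)` on `ℝ × (τ, ∞)` that starts at time `τ` from a step at `a`,
with values `-N` on the left of it and `N` on the right. -/
noncomputable def erfStep (c N a τ y s : ℝ) : ℝ := N * erf (√(c / (s - τ)) * (y - a))

/-- The space derivative of `erfStep`. -/
noncomputable def erfStepX (c N a τ y s : ℝ) : ℝ :=
  N * (erfDeriv (√(c / (s - τ)) * (y - a)) * √(c / (s - τ)))

variable {c N a k τ s t y : ℝ}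

theorem continuousAt_sqrt_div_sub (h : τ < s) : ContinuousAt (fun τ => √(c / (s - τ))) τ :=
  (continuousAt_const.div (by fun_prop) (sub_pos.2 h).ne').sqrt

theorem tendsto_sqrt_div_sub_nhdsLT_atTop (hc : 0 < c) (s : ℝ) :
    Tendsto (fun τ => √(c / (s - τ))) (𝓝[<] s) atTop := by
  have hsub : Tendsto (fun τ => s - τ) (𝓝[<] s) (𝓝[>] 0) := by
    simpa using (continuous_sub_left s).continuousWithinAt.tendsto_nhdsWithin (x := s)
      (s := Iio s) (t := Ioi 0) fun τ hτ => sub_pos.2 hτ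
  simp only [div_eq_mul_inv]
  exact Real.tendsto_sqrt_atTop.comp ((tendsto_inv_nhdsGT_zero.comp hsub).const_mul_atTop hc)

theorem hasDerivAt_sqrt_div_sub (hc : 0 < c) (hs : τ < s) :
    HasDerivAt (fun r => √(c / (r - τ))) (-(√(c / (s - τ)) ^ 3 / (2 * c))) s := by
  have hsτ : 0 < s - τ := sub_pos.2 hs
  have hquot : HasDerivAt (fun r => c / (r - τ)) (-c / (s - τ) ^ 2) s := by
    simpa using (hasDerivAt_const s c).fun_div ((hasDerivAt_id s).sub_const τ) hsτ.ne'
  have hpos : 0 < c / (s - τ) := div_pos hc hsτ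
  refine (hquot.sqrt hpos.ne').congr_deriv ?_
  have hsq : √(c / (s - τ)) ^ 4 = (c / (s - τ)) ^ 2 := by
    rw [show 4 = 2 * 2 from rfl, pow_mul, Real.sq_sqrt hpos.le]
  have hroot : 0 < √(c / (s - τ)) := Real.sqrt_pos.2 hpos
  rw [div_eq_iff (mul_ne_zero two_ne_zero hroot.ne')]
  calc -c / (s - τ) ^ 2 = -(c / (s - τ)) ^ 2 / c := by field_simp
    _ = -(√(c / (s - τ)) ^ 3 / (2 * c)) * (2 * √(c / (s - τ))) := by rw [← hsq]; field_simp

theorem isHeatSolutionOn_erfStep (hc : 0 < c) :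
    IsHeatSolutionOn (1 / (4 * c)) univ (Ioi τ) (erfStep c N a τ) (erfStepX c N a τ) where
  hasDerivAt y _ s _ := hasDerivAt_const_mul_erf N _ a y
  exists_second_deriv y _ s hs := by
    set l := √(c / (s - τ)) with hl
    have hlin : HasDerivAt (fun y => l * (y - a)) l y := by
      simpa using ((hasDerivAt_id y).sub_const a).const_mul l
    refine ⟨_, (((hasDerivAt_erfDeriv _).comp y hlin).mul_const l).const_mul N, ?_⟩
    have htime : HasDerivAt (erfStep c N a τ y) _ s :=
      ((hasDerivAt_erf _).comp s ((hasDerivAt_sqrt_div_sub hc hs).mul_const (y - a))).const_mul N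
    refine (htime.congr_deriv ?_).hasDerivWithinAt
    rw [← hl]
    field_simp
    ring

theorem continuousOn_erfStep :
    ContinuousOn (fun z : ℝ × ℝ => erfStep c N a τ z.1 z.2) (univ ×ˢ Ioi τ) := by
  have harg : ContinuousOn (fun z : ℝ × ℝ => √(c / (z.2 - τ)) * (z.1 - a)) (univ ×ˢ Ioi τ) :=
    ((continuousOn_const.div (by fun_prop) fun z hz => (sub_pos.2 hz.2).ne').sqrt).mul
      (by fun_prop)
  exact continuousOn_const.mul (continuous_erf.comp_continuousOn harg)

theorem erfStep_le_neg (hc : 0 ≤ c) (hN : 0 ≤ N) (hτ : τ < s) (hst : s ≤ t) (hya : y ≤ a)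
    (hk : √(c / (t - τ)) * (y - a) ≤ -k) : erfStep c N a τ y s ≤ -(N * erf k) := by
  have hl : √(c / (t - τ)) ≤ √(c / (s - τ)) := by gcongr
  exact const_mul_erf_le_neg hN ((mul_le_mul_of_nonpos_right hl (sub_nonpos.2 hya)).trans hk)

theorem le_erfStep (hc : 0 ≤ c) (hN : 0 ≤ N) (hτ : τ < s) (hst : s ≤ t) (hay : a ≤ y)
    (hk : k ≤ √(c / (t - τ)) * (y - a)) : N * erf k ≤ erfStep c N a τ y s := by
  have hl : √(c / (t - τ)) ≤ √(c / (s - τ)) := by gcongr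
  exact mul_le_mul_of_nonneg_left (strictMono_erf.monotone
    (hk.trans (mul_le_mul_of_nonneg_right hl (sub_nonneg.2 hay)))) hN

end StepSolution

section GradientEstimate

variable {c N k r t₀ t x z : ℝ} {u ux : ℝ → ℝ → ℝ}

theorem deriv_le_of_singleCrossingOn_erfStep_sub {τ : ℝ} (hc : 0 < c) (hN : 0 < N) (hτ : τ < t₀)
    (ht : t₀ < t) (hr : 0 < r) (hkr : 2 * k ≤ √(c / (t - τ)) * r)
    (hu : IsHeatSolutionOn (1 / (4 * c)) (Ioo (x - r) (x + r)) (Ioc t₀ t) u ux)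
    (hcont : ContinuousOn (fun z : ℝ × ℝ => u z.1 z.2) (Icc (x - r) (x + r) ×ˢ Icc t₀ t))
    (hbdd : ∀ y ∈ Icc (x - r) (x + r), ∀ s ∈ Icc t₀ t, |u y s| ≤ N * erf k)
    (hz : N * erf z = u x t)
    (hinit : SingleCrossingOn (fun y => erfStep c N (x - z / √(c / (t - τ))) τ y t₀ - u y t₀)
      (Icc (x - r) (x + r))) :
    ux x t ≤ N * (erfDeriv z * √(c / (t - τ))) := by
  set l := √(c / (t - τ)) with hl
  set a := x - z / l with ha
  have hl_pos : 0 < l := Real.sqrt_pos.2 (div_pos hc (sub_pos.2 (hτ.trans ht)))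
  have hxI : x ∈ Icc (x - r) (x + r) := ⟨by linarith, by linarith⟩
  have harg : l * (x - a) = z := by rw [ha]; field_simp; ring
  have hzk : |z| ≤ k := by
    refine abs_erf_le_erf_iff.1 (le_of_mul_le_mul_left ?_ hN)
    rw [← abs_of_pos hN, ← abs_mul, abs_of_pos hN, hz]
    exact hbdd x hxI t ⟨ht.le, le_rfl⟩
  obtain ⟨hkz, hzk⟩ := abs_le.1 hzk
  have hzr : z / l ≤ r := by rw [div_le_iff₀' hl_pos]; linarith
  have hrz : -r ≤ z / l := by rw [le_div_iff₀' hl_pos]; linarith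
  have hw := ((isHeatSolutionOn_erfStep (N := N) (a := a) hc).mono (subset_univ (Ioo _ _))
    fun s (hs : s ∈ Ioc t₀ t) => hτ.trans hs.1).sub hu
  have hwcont := (continuousOn_erfStep (c := c) (N := N) (a := a)).mono (prod_mono
    (subset_univ (Icc (x - r) (x + r))) fun s (hs : s ∈ Icc t₀ t) => hτ.trans_le hs.1) |>.sub hcont
  have hleft : ∀ s ∈ Ioc t₀ t, erfStep c N a τ (x - r) s - u (x - r) s ≤ 0 := fun s hs =>
    have hstep := erfStep_le_neg (a := a) (y := x - r) (k := k) hc.le hN.le (hτ.trans hs.1) hs.2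
      (by linarith) (by linarith)
    have hu_ge := (abs_le.1 (hbdd _ (left_mem_Icc.2 (by linarith)) s (Ioc_subset_Icc_self hs))).1
    sub_nonpos.2 (hstep.trans hu_ge)
  have hright : ∀ s ∈ Ioc t₀ t, 0 ≤ erfStep c N a τ (x + r) s - u (x + r) s := fun s hs =>
    have hstep := le_erfStep (a := a) (y := x + r) (k := k) hc.le hN.le (hτ.trans hs.1) hs.2
      (by linarith) (by linarith)
    have hu_le := (abs_le.1 (hbdd _ (right_mem_Icc.2 (by linarith)) s (Ioc_subset_Icc_self hs))).2
    sub_nonneg.2 (hu_le.trans hstep)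
  have hcross := hw.singleCrossingOn (by positivity) hwcont hleft hright hinit ⟨ht.le, le_rfl⟩
  have hzero : erfStep c N a τ x t - u x t = 0 := by rw [erfStep, ← hl, harg, hz, sub_self]
  have hslope := hcross.deriv_nonneg (Icc_mem_nhds (by linarith) (by linarith)) hzero
    (hw.hasDerivAt x ⟨by linarith, by linarith⟩ t ⟨ht, le_rfl⟩)
  rwa [erfStepX, ← hl, harg, sub_nonneg] at hslope

theorem deriv_le_of_isHeatSolutionOn_Icc {ux₀ : ℝ → ℝ} {C : ℝ} (hc : 0 < c) (hN : 0 < N)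
    (ht : t₀ < t) (hr : 0 < r) (hkr : 2 * k < √(c / (t - t₀)) * r)
    (hu : IsHeatSolutionOn (1 / (4 * c)) (Ioo (x - r) (x + r)) (Ioc t₀ t) u ux)
    (hcont : ContinuousOn (fun z : ℝ × ℝ => u z.1 z.2) (Icc (x - r) (x + r) ×ˢ Icc t₀ t))
    (hbdd : ∀ y ∈ Icc (x - r) (x + r), ∀ s ∈ Icc t₀ t, |u y s| ≤ N * erf k)
    (hinit : ∀ y ∈ Icc (x - r) (x + r),
      HasDerivWithinAt (fun y => u y t₀) (ux₀ y) (Icc (x - r) (x + r)) y)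
    (hinit_le : ∀ y ∈ Icc (x - r) (x + r), ux₀ y ≤ C) (hz : N * erf z = u x t) :
    ux x t ≤ N * (erfDeriv z * √(c / (t - t₀))) := by
  have hroot : Tendsto (fun τ => √(c / (t - τ))) (𝓝[<] t₀) (𝓝 √(c / (t - t₀))) :=
    (continuousAt_sqrt_div_sub ht).mono_left nhdsWithin_le_nhds
  have hside := (hroot.mul_const r).eventually_const_lt hkr
  have hcross := (tendsto_sqrt_div_sub_nhdsLT_atTop hc t₀).eventually
    (eventually_singleCrossingOn_const_mul_erf_sub (convex_Icc _ _) hN hinit hinit_le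
      fun y hy => hbdd y hy t₀ ⟨le_rfl, ht.le⟩)
  refine ge_of_tendsto ((hroot.const_mul _).const_mul N) ?_
  filter_upwards [self_mem_nhdsWithin, hside, hcross] with τ hτ hside hcross
  exact deriv_le_of_singleCrossingOn_erfStep_sub hc hN hτ ht hr hside.le hu hcont hbdd hz
    (hcross _)

theorem deriv_le_of_isHeatSolutionOn_Ioo {d : ℝ} (hc : 0 < c) (hN : 0 < N) (ht : t₀ < t)
    (hd : 0 < d) (hkd : 2 * k < √(c / (t - t₀)) * d)
    (hu : IsHeatSolutionOn (1 / (4 * c)) (Ioo (x - d) (x + d)) (Icc t₀ t) u ux)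
    (hcont : ContinuousOn (fun z : ℝ × ℝ => u z.1 z.2) (Ioo (x - d) (x + d) ×ˢ Icc t₀ t))
    (hbdd : ∀ y ∈ Ioo (x - d) (x + d), ∀ s ∈ Icc t₀ t, |u y s| ≤ N * erf k)
    (hz : N * erf z = u x t) : ux x t ≤ N * (erfDeriv z * √(c / (t - t₀))) := by
  have hroot : 0 < √(c / (t - t₀)) := Real.sqrt_pos.2 (div_pos hc (sub_pos.2 ht))
  obtain ⟨r, hr, hrd⟩ := exists_between (max_lt hd ((div_lt_iff₀' hroot).2 hkd))
  obtain ⟨hr, hkr⟩ := max_lt_iff.1 hr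
  have hI : Icc (x - r) (x + r) ⊆ Ioo (x - d) (x + d) :=
    Icc_subset_Ioo (sub_lt_sub_left hrd x) (add_lt_add_right hrd x)
  have ht₀ : t₀ ∈ Icc t₀ t := left_mem_Icc.2 ht.le
  have hux : ContinuousOn (fun y => ux y t₀) (Icc (x - r) (x + r)) := fun y hy =>
    have ⟨_, huxx, _⟩ := hu.exists_second_deriv y (hI hy) t₀ ht₀
    huxx.continuousAt.continuousWithinAt
  obtain ⟨C, hC⟩ := isCompact_Icc.bddAbove_image hux
  exact deriv_le_of_isHeatSolutionOn_Icc hc hN ht hr ((div_lt_iff₀' hroot).1 hkr)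
    (hu.mono (Ioo_subset_Icc_self.trans hI) Ioc_subset_Icc_self)
    (hcont.mono (prod_mono_left hI)) (fun y hy => hbdd y (hI hy))
    (fun y hy => (hu.hasDerivAt y (hI hy) t₀ ht₀).hasDerivWithinAt)
    (fun y hy => hC (mem_image_of_mem _ hy)) hz

theorem two_mul_sqrt_mul_div_two_mul_sqrt_lt {d : ℝ} (hc : 0 < c) (hd : 0 < d) (ht₀ : 0 < t₀)
    (ht : t₀ < t) : 2 * (√c * d / (2 * √t)) < √(c / (t - t₀)) * d := by
  have ht_pos : 0 < t := ht₀.trans ht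
  calc 2 * (√c * d / (2 * √t)) = √(c / t) * d := by
        rw [Real.sqrt_div hc.le]; field_simp
    _ < √(c / (t - t₀)) * d := by
        gcongr
        exact sub_lt_self t ht₀

theorem mul_erfDeriv_mul_sqrt_div (hc : 0 ≤ c) (N z t : ℝ) :
    N * (erfDeriv z * √(c / t)) = 2 * N * √(c / (Real.pi * t)) * Real.exp (-z ^ 2) := by
  rw [erfDeriv, Real.sqrt_div hc, Real.sqrt_div hc, Real.sqrt_mul Real.pi_pos.le]
  field_simp

theorem heat_equation_gradient_estimate_general {c M T x₀ x₁ : ℝ} (hc : 0 < c) (hM : 0 < M)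
    {u ux : ℝ → ℝ → ℝ} (hu : IsHeatSolutionOn (1 / (4 * c)) (Ioo x₀ x₁) (Ioc 0 T) u ux)
    (hcont : ContinuousOn (fun z : ℝ × ℝ => u z.1 z.2) (Ioo x₀ x₁ ×ˢ Ioc 0 T))
    (hbdd : ∀ x ∈ Ioo x₀ x₁, ∀ t ∈ Ioc 0 T, |u x t| ≤ M)
    {x t z : ℝ} (hx : x ∈ Ioo x₀ x₁) (ht : t ∈ Ioc 0 T)
    (hz : erf z = u x t / (M / erf (√c * min (x - x₀) (x₁ - x) / (2 * √t)))) :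
    ux x t ≤ 2 * (M / erf (√c * min (x - x₀) (x₁ - x) / (2 * √t))) * √(c / (Real.pi * t)) *
      Real.exp (-z ^ 2) := by
  set d := min (x - x₀) (x₁ - x)
  set k := √c * d / (2 * √t) with hk
  have hd_pos : 0 < d := lt_min (sub_pos.2 hx.1) (sub_pos.2 hx.2)
  have hI : Ioo (x - d) (x + d) ⊆ Ioo x₀ x₁ :=
    Ioo_subset_Ioo (le_sub_comm.1 (min_le_left _ _)) (le_sub_iff_add_le'.1 (min_le_right _ _))
  have hk_pos : 0 < erf k :=
    erf_pos (div_pos (mul_pos (Real.sqrt_pos.2 hc) hd_pos)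
      (mul_pos two_pos (Real.sqrt_pos.2 ht.1)))
  have hN : 0 < M / erf k := div_pos hM hk_pos
  have hroot : Tendsto (fun t₀ => √(c / (t - t₀))) (𝓝[>] 0) (𝓝 √(c / t)) := by
    simpa using (continuousAt_sqrt_div_sub ht.1).mono_left nhdsWithin_le_nhds
  rw [← mul_erfDeriv_mul_sqrt_div hc.le]
  refine ge_of_tendsto ((hroot.const_mul _).const_mul _) ?_
  filter_upwards [Ioo_mem_nhdsGT ht.1] with t₀ ht₀
  have hJ : Icc t₀ t ⊆ Ioc 0 T := fun s hs => ⟨ht₀.1.trans_le hs.1, hs.2.trans ht.2⟩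
  refine deriv_le_of_isHeatSolutionOn_Ioo hc hN ht₀.2 hd_pos
    (two_mul_sqrt_mul_div_two_mul_sqrt_lt hc hd_pos ht₀.1 ht₀.2) (hu.mono hI hJ)
    (hcont.mono (prod_mono hI hJ)) (fun y hy s hs => ?_) ?_
  · rw [← hk, div_mul_cancel₀ M hk_pos.ne']
    exact hbdd y (hI hy) s (hJ hs)
  · rw [hz, mul_div_cancel₀ _ hN.ne']

end GradientEstimate

/-- Gradient estimate, found by counting intersections, for
bounded solutions of the heat equation `u_t = u_{xx}/(4c)` on an interval. -/
theorem heat_equation_gradient_estimate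
    (c M T x₀ x₁ : ℝ) (hc : 0 < c) (hM : 0 < M) (hT : 0 < T) (hx : x₀ < x₁)
    (u ut ux uxx : ℝ → ℝ → ℝ)
    (hu_smooth : ContDiffOn ℝ (⊤ : ℕ∞) (fun z : ℝ × ℝ => u z.1 z.2)
      (Set.Icc x₀ x₁ ×ˢ Set.Icc 0 T))
    (hut : ∀ x ∈ Set.Icc x₀ x₁, ∀ t ∈ Set.Icc (0:ℝ) T,
      HasDerivWithinAt (fun s => u x s) (ut x t) (Set.Icc 0 T) t)
    (hux : ∀ x ∈ Set.Icc x₀ x₁, ∀ t ∈ Set.Icc (0:ℝ) T,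
      HasDerivWithinAt (fun y => u y t) (ux x t) (Set.Icc x₀ x₁) x)
    (huxx : ∀ x ∈ Set.Icc x₀ x₁, ∀ t ∈ Set.Icc (0:ℝ) T,
      HasDerivWithinAt (fun y => ux y t) (uxx x t) (Set.Icc x₀ x₁) x)
    (hpde : ∀ x ∈ Set.Icc x₀ x₁, ∀ t ∈ Set.Icc (0:ℝ) T,
      ut x t = uxx x t / (4 * c))
    (hbdd : ∀ x ∈ Set.Icc x₀ x₁, ∀ t ∈ Set.Icc (0:ℝ) T, |u x t| < M) :
    ∀ x ∈ Set.Ioo x₀ x₁, ∀ t ∈ Set.Ioc (0:ℝ) T,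
      ∀ z : ℝ,
        erf z = u x t /
          (M / erf (Real.sqrt c * min (x - x₀) (x₁ - x) / (2 * Real.sqrt t))) →
        ux x t ≤
          2 * (M / erf (Real.sqrt c * min (x - x₀) (x₁ - x) / (2 * Real.sqrt t)))
            * Real.sqrt (c / (Real.pi * t)) * Real.exp (-z ^ 2) := by
  intro x hx t ht z hz
  have hI : Ioo x₀ x₁ ⊆ Icc x₀ x₁ := Ioo_subset_Icc_self
  have hJ : Ioc 0 T ⊆ Icc 0 T := Ioc_subset_Icc_self
  have hu : IsHeatSolutionOn (1 / (4 * c)) (Ioo x₀ x₁) (Ioc 0 T) u ux :=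
    { hasDerivAt y hy s hs := (hux y (hI hy) s (hJ hs)).hasDerivAt (Icc_mem_nhds hy.1 hy.2)
      exists_second_deriv y hy s hs := by
        refine ⟨uxx y s, (huxx y (hI hy) s (hJ hs)).hasDerivAt (Icc_mem_nhds hy.1 hy.2), ?_⟩
        rw [one_div_mul_eq_div, ← hpde y (hI hy) s (hJ hs)]
        exact (hut y (hI hy) s (hJ hs)).mono hJ }
  exact heat_equation_gradient_estimate_general hc hM hu
    (hu_smooth.continuousOn.mono (prod_mono hI hJ))
    (fun y hy s hs => (hbdd y (hI hy) s (hJ hs)).le) hx ht hz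
end

section
/- For every M > 0 there exist c, T' > 0, depending only on M, with the following property. Let n ≥ 1, T > 0, and let u : ℝⁿ × [0,T] → ℝ be infinitely differentiable, move by graphical mean curvature flow, be periodic with respect to some basis γ₁,…,γₙ of ℝⁿ (u(x+γₖ,t) = u(x,t) for every k), and satisfy |u(x,t)| < M everywhere. Then for every x ∈ ℝⁿ and every t ∈ (0, min(T,T')], the gradient function satisfies √(1 + |Du(x,t)|²) ≤ √t · exp( c·(|u(x,t)| − 2M)² / (4t) ). -/
/-!
Write `W = 1 + |Du|²` and let `L = ∂ₜ - ∑ gⁱʲ Dᵢⱼ` be the heat operator whose coefficients are the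
inverse metric of the graph of `u`. Differentiating `L u = 0` gives `L (log W) ≤ -½ ‖D log W‖²`,
where `‖·‖` is the norm of the graph metric; in it `‖Du‖² = 1 - 1 / W`. At a maximum of
`φ = log W - log t - (b - u)² / t` the relation `D log W = -(2 (b - u) / t) Du` therefore turns
`0 ≤ L φ` into `(1 - 2 / W) ((b - u)² - t) ≤ 0`.

Let `b - u ≥ m > 0`. Where `φ > 0`, the gradient is already large, namely
`W > t exp ((b - u)² / t) ≥ m⁴ / (2 t)`, so for small `t` both factors are positive and `φ` has no
positive maximum. The same lower bound tends to infinity as `t → 0`, so `φ ≤ 0` for small `t`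
whatever the initial gradient is. The choice `b = 2 M`, applied to `u` and to `-u`, gives the
estimate.
-/

open Set Filter Function Topology

section BilinearForms

variable {ι V : Type*} [Fintype ι] [AddCommGroup V] [Module ℝ V]

theorem bilinForm_sum_smul_self_le (B : LinearMap.BilinForm ℝ V) (v : ι → V) (c : ι → ℝ)
    (hB : ∀ x ∈ Submodule.span ℝ (range v), 0 ≤ B x x) :
    B (∑ i, c i • v i) (∑ i, c i • v i) ≤ (∑ i, c i ^ 2) * ∑ i, B (v i) (v i) := by
  have lagrange : ∑ i, ∑ j, B (c i • v j - c j • v i) (c i • v j - c j • v i) =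
      2 * ((∑ i, c i ^ 2) * ∑ i, B (v i) (v i) - B (∑ i, c i • v i) (∑ i, c i • v i)) := by
    have summand (i j : ι) : B (c i • v j - c j • v i) (c i • v j - c j • v i) =
        c i ^ 2 * B (v j) (v j) - c i * c j * B (v j) (v i) - c j * c i * B (v i) (v j) +
          c j ^ 2 * B (v i) (v i) := by
      simp only [map_sub, map_smul, LinearMap.sub_apply, LinearMap.smul_apply, smul_eq_mul]
      ring
    have diag : (∑ i, c i ^ 2) * ∑ i, B (v i) (v i) = ∑ i, ∑ j, c i ^ 2 * B (v j) (v j) :=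
      Finset.sum_mul_sum ..
    have cross : B (∑ i, c i • v i) (∑ i, c i • v i) = ∑ i, ∑ j, c i * c j * B (v j) (v i) := by
      simp only [map_sum, map_smul, LinearMap.sum_apply, LinearMap.smul_apply, smul_eq_mul,
        Finset.mul_sum, mul_assoc]
    rw [diag, cross]
    simp only [summand, Finset.sum_add_distrib, Finset.sum_sub_distrib]
    rw [Finset.sum_comm (f := fun i j => c j * c i * B (v i) (v j)),
      Finset.sum_comm (f := fun i j => c j ^ 2 * B (v i) (v i))]
    ring
  have : 0 ≤ ∑ i, ∑ j, B (c i • v j - c j • v i) (c i • v j - c j • v i) := by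
    have mem (i : ι) : v i ∈ Submodule.span ℝ (range v) := Submodule.subset_span ⟨i, rfl⟩
    exact Finset.sum_nonneg fun i _ => Finset.sum_nonneg fun j _ =>
      hB _ (sub_mem (Submodule.smul_mem _ _ (mem j)) (Submodule.smul_mem _ _ (mem i)))
  linarith

end BilinearForms

section GraphMetric

variable {ι E : Type*} [Fintype ι] [NormedAddCommGroup E] [NormedSpace ℝ E]

/-- The square `v² = 1 + |p|²` of the gradient function of a graph with gradient `p`. -/
def gradFunSq (p : ι → ℝ) : ℝ :=
  1 + ∑ i, p i ^ 2

/-- The trace `∑ᵢⱼ (δᵢⱼ - pᵢ pⱼ / (1 + |p|²)) X(eᵢ, eⱼ)` of a bilinear form `X` with respect to the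
metric of a graph with gradient `p`, in a form that avoids the double sum. The family `e` plays the
role of the standard basis of `ℝⁿ`. -/
noncomputable def graphTrace (e : ι → E) (p : ι → ℝ) : (E →L[ℝ] E →L[ℝ] ℝ) →ₗ[ℝ] ℝ where
  toFun X := ∑ i, X (e i) (e i) - X (∑ i, p i • e i) (∑ i, p i • e i) / gradFunSq p
  map_add' X Y := by simp [Finset.sum_add_distrib, -map_sum]; ring
  map_smul' c X := by simp [Finset.mul_sum, mul_sub, mul_div_assoc, -map_sum]

/-- The inner product `⟨ℓ, m⟩ = ∑ᵢⱼ (δᵢⱼ - pᵢ pⱼ / (1 + |p|²)) ℓ(eᵢ) m(eⱼ)` that the metric of a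
graph with gradient `p` induces on covectors. -/
noncomputable def graphCometric (e : ι → E) (p : ι → ℝ) : LinearMap.BilinForm ℝ (E →L[ℝ] ℝ) :=
  LinearMap.mk₂ ℝ (fun ℓ m => graphTrace e p (ℓ.smulRight m))
    (fun ℓ ℓ' m => by rw [← map_add]; congr 1; ext; simp [add_mul])
    (fun c ℓ m => by rw [← map_smul]; congr 1; ext; simp [mul_assoc])
    (fun ℓ m m' => by rw [← map_add]; congr 1; ext; simp)
    (fun c ℓ m => by rw [← map_smul]; congr 1; ext; simp [mul_left_comm])

variable (e : ι → E) (p : ι → ℝ)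

theorem gradFunSq_pos : 0 < gradFunSq p := by
  unfold gradFunSq; positivity

theorem graphTrace_apply (X : E →L[ℝ] E →L[ℝ] ℝ) : graphTrace e p X =
    ∑ i, X (e i) (e i) - X (∑ i, p i • e i) (∑ i, p i • e i) / gradFunSq p :=
  rfl

theorem graphTrace_neg (X : E →L[ℝ] E →L[ℝ] ℝ) : graphTrace e p (-X) = -graphTrace e p X := by
  rw [← neg_one_smul ℝ X, map_smul, neg_one_smul]

theorem graphTrace_sub (X Y : E →L[ℝ] E →L[ℝ] ℝ) :
    graphTrace e p (X - Y) = graphTrace e p X - graphTrace e p Y := by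
  rw [sub_eq_add_neg X, map_add, graphTrace_neg, ← sub_eq_add_neg]

theorem graphTrace_eq_sum [DecidableEq ι] (X : E →L[ℝ] E →L[ℝ] ℝ) : graphTrace e p X = ∑ i, ∑ j,
    ((if i = j then (1 : ℝ) else 0) - p i * p j / (1 + ∑ k, p k ^ 2)) * X (e i) (e j) := by
  simp only [graphTrace_apply, gradFunSq, sub_mul, Finset.sum_sub_distrib, ite_mul, one_mul,
    zero_mul, Finset.sum_ite_eq, Finset.mem_univ, if_true, map_sum, map_smul,
    sum_apply, smul_apply, smul_eq_mul, Finset.sum_div, Finset.mul_sum]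
  rw [Finset.sum_comm (f := fun i j => p i * (p j * X (e j) (e i)) / (1 + ∑ k, p k ^ 2))]
  congr! 3
  ring

theorem graphTrace_smulRight (ℓ m : E →L[ℝ] ℝ) :
    graphTrace e p (ℓ.smulRight m) = graphCometric e p ℓ m :=
  rfl

theorem graphCometric_apply (ℓ m : E →L[ℝ] ℝ) : graphCometric e p ℓ m =
    ∑ i, ℓ (e i) * m (e i) - (∑ i, p i * ℓ (e i)) * (∑ i, p i * m (e i)) / gradFunSq p := by
  simp only [← graphTrace_smulRight, graphTrace_apply, ContinuousLinearMap.smulRight_apply,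
    smul_apply, smul_eq_mul]
  simp only [map_sum, map_smul, smul_eq_mul]

theorem graphCometric_comm (ℓ m : E →L[ℝ] ℝ) : graphCometric e p ℓ m = graphCometric e p m ℓ := by
  simp only [graphCometric_apply, mul_comm]

variable {e p} in
theorem graphCometric_eq_zero_of_apply_eq_zero {m : E →L[ℝ] ℝ} (h : ∀ i, m (e i) = 0)
    (ℓ : E →L[ℝ] ℝ) : graphCometric e p ℓ m = 0 := by
  simp [graphCometric_apply, h]

theorem graphTrace_nonneg {X : E →L[ℝ] E →L[ℝ] ℝ}
    (hX : ∀ x ∈ Submodule.span ℝ (range e), 0 ≤ X x x) : 0 ≤ graphTrace e p X := by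
  rw [graphTrace_apply, sub_nonneg, div_le_iff₀ (gradFunSq_pos p), mul_comm]
  have trace_nonneg : 0 ≤ ∑ i, X (e i) (e i) :=
    Finset.sum_nonneg fun i _ => hX _ (Submodule.subset_span ⟨i, rfl⟩)
  refine (bilinForm_sum_smul_self_le X.toBilinForm e p hX).trans ?_
  exact mul_le_mul_of_nonneg_right (le_add_of_nonneg_left zero_le_one) trace_nonneg

theorem graphCometric_self_nonneg (ℓ : E →L[ℝ] ℝ) : 0 ≤ graphCometric e p ℓ ℓ :=
  graphTrace_nonneg e p fun x _ => mul_self_nonneg (ℓ x)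

theorem graphCometric_sum_smul_self_le (ℓ : ι → E →L[ℝ] ℝ) :
    graphCometric e p (∑ i, p i • ℓ i) (∑ i, p i • ℓ i) ≤
      gradFunSq p * ∑ i, graphCometric e p (ℓ i) (ℓ i) := by
  refine (bilinForm_sum_smul_self_le _ ℓ p fun m _ => graphCometric_self_nonneg e p m).trans ?_
  exact mul_le_mul_of_nonneg_right (le_add_of_nonneg_left zero_le_one)
    (Finset.sum_nonneg fun i _ => graphCometric_self_nonneg e p (ℓ i))

variable {e p} in
theorem graphCometric_self_of_apply_eq_mul {ℓ m : E →L[ℝ] ℝ} {c : ℝ}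
    (h : ∀ i, ℓ (e i) = c * m (e i)) :
    graphCometric e p ℓ ℓ = c ^ 2 * graphCometric e p m m := by
  simp only [graphCometric_apply, h, mul_left_comm _ c, mul_assoc c, ← Finset.mul_sum]
  ring

variable {e p} in
theorem graphCometric_self_of_apply_eq {ℓ : E →L[ℝ] ℝ} (h : ∀ i, ℓ (e i) = p i) :
    graphCometric e p ℓ ℓ = 1 - 1 / gradFunSq p := by
  have := (gradFunSq_pos p).ne'
  have : ∑ i, p i * p i = gradFunSq p - 1 := by simp [gradFunSq, sq]
  rw [graphCometric_apply]
  simp only [h, this]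
  field_simp
  ring

end GraphMetric

section SecondDerivatives

variable {E G : Type*} [NormedAddCommGroup E] [NormedSpace ℝ E] [NormedAddCommGroup G]
  [NormedSpace ℝ G] {F : E → G} {f g : E → ℝ} {z : E}

theorem eventually_differentiableAt_of_contDiffAt_two (hF : ContDiffAt ℝ 2 F z) :
    ∀ᶠ y in 𝓝 z, DifferentiableAt ℝ F y :=
  (hF.eventually (by simp)).mono fun _ hy => hy.differentiableAt two_ne_zero

theorem hasFDerivAt_fderiv_of_contDiffAt_two (hF : ContDiffAt ℝ 2 F z) :
    HasFDerivAt (fderiv ℝ F) (fderiv ℝ (fderiv ℝ F) z) z :=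
  ((hF.fderiv_right (m := 1) le_rfl).differentiableAt one_ne_zero).hasFDerivAt

theorem fderiv_fderiv_apply_comm (hF : ContDiffAt ℝ 2 F z) (v w : E) :
    fderiv ℝ (fderiv ℝ F) z v w = fderiv ℝ (fderiv ℝ F) z w v :=
  (hF.isSymmSndFDerivAt (by simp)).eq v w

theorem fderiv_fderiv_apply (hF : ContDiffAt ℝ 2 F z) (v : E) :
    fderiv ℝ (fun y => fderiv ℝ F y v) z = fderiv ℝ (fderiv ℝ F) z v := by
  rw [((hasFDerivAt_fderiv_of_contDiffAt_two hF).clm_apply (hasFDerivAt_const v z)).fderiv]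
  ext w
  simpa using fderiv_fderiv_apply_comm hF w v

theorem fderiv_fderiv_fderiv_apply (hF : ContDiffAt ℝ 3 F z) (v : E) :
    fderiv ℝ (fderiv ℝ fun y => fderiv ℝ F y v) z = fderiv ℝ (fderiv ℝ (fderiv ℝ F)) z v := by
  have first : fderiv ℝ (fun y => fderiv ℝ F y v) =ᶠ[𝓝 z] fun y => fderiv ℝ (fderiv ℝ F) y v := by
    filter_upwards [(hF.of_le (by norm_num)).eventually (n := 2) (by simp)] with y hy
    exact fderiv_fderiv_apply hy v
  rw [first.fderiv_eq, fderiv_fderiv_apply (hF.fderiv_right (m := 2) (by norm_num))]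

theorem fderiv_fderiv_sub (hf : ContDiffAt ℝ 2 f z) (hg : ContDiffAt ℝ 2 g z) :
    fderiv ℝ (fderiv ℝ fun y => f y - g y) z =
      fderiv ℝ (fderiv ℝ f) z - fderiv ℝ (fderiv ℝ g) z := by
  have first : fderiv ℝ (fun y => f y - g y) =ᶠ[𝓝 z] fun y => fderiv ℝ f y - fderiv ℝ g y := by
    filter_upwards [eventually_differentiableAt_of_contDiffAt_two hf,
      eventually_differentiableAt_of_contDiffAt_two hg] with y hfy hgy
    exact fderiv_fun_sub hfy hgy
  rw [first.fderiv_eq]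
  exact ((hasFDerivAt_fderiv_of_contDiffAt_two hf).sub
    (hasFDerivAt_fderiv_of_contDiffAt_two hg)).fderiv

theorem fderiv_fderiv_mul (hf : ContDiffAt ℝ 2 f z) (hg : ContDiffAt ℝ 2 g z) :
    fderiv ℝ (fderiv ℝ fun y => f y * g y) z =
      f z • fderiv ℝ (fderiv ℝ g) z + (fderiv ℝ f z).smulRight (fderiv ℝ g z) +
        (g z • fderiv ℝ (fderiv ℝ f) z + (fderiv ℝ g z).smulRight (fderiv ℝ f z)) := by
  have first : fderiv ℝ (fun y => f y * g y) =ᶠ[𝓝 z]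
      fun y => f y • fderiv ℝ g y + g y • fderiv ℝ f y := by
    filter_upwards [eventually_differentiableAt_of_contDiffAt_two hf,
      eventually_differentiableAt_of_contDiffAt_two hg] with y hfy hgy
    exact fderiv_fun_mul hfy hgy
  rw [first.fderiv_eq]
  exact (((hf.differentiableAt two_ne_zero).hasFDerivAt.smul
    (hasFDerivAt_fderiv_of_contDiffAt_two hg)).add
    ((hg.differentiableAt two_ne_zero).hasFDerivAt.smul
    (hasFDerivAt_fderiv_of_contDiffAt_two hf))).fderiv

theorem fderiv_fderiv_comp {h : ℝ → ℝ} (hh : ContDiffAt ℝ 2 h (f z)) (hf : ContDiffAt ℝ 2 f z) :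
    fderiv ℝ (fderiv ℝ fun y => h (f y)) z = deriv h (f z) • fderiv ℝ (fderiv ℝ f) z +
      deriv (deriv h) (f z) • (fderiv ℝ f z).smulRight (fderiv ℝ f z) := by
  have first : fderiv ℝ (fun y => h (f y)) =ᶠ[𝓝 z] fun y => deriv h (f y) • fderiv ℝ f y := by
    filter_upwards [eventually_differentiableAt_of_contDiffAt_two hf,
      hf.continuousAt.eventually (eventually_differentiableAt_of_contDiffAt_two hh)] with y hfy hhy
    exact (hhy.hasDerivAt.comp_hasFDerivAt y hfy.hasFDerivAt).fderiv
  have second : HasDerivAt (deriv h) (deriv (deriv h) (f z)) (f z) :=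
    ((hh.derivWithin (m := 1) le_rfl).differentiableAt one_ne_zero).hasDerivAt
  rw [first.fderiv_eq]
  refine ((second.comp_hasFDerivAt z (hf.differentiableAt two_ne_zero).hasFDerivAt).smul
    (hasFDerivAt_fderiv_of_contDiffAt_two hf)).fderiv.trans ?_
  congr 1
  ext
  simp [mul_assoc]

theorem deriv_deriv_nonpos_of_isLocalMax {φ : ℝ → ℝ} {x : ℝ} (hmax : IsLocalMax φ x)
    (hcont : ContinuousAt φ x) : deriv (deriv φ) x ≤ 0 := by
  by_contra! hpos
  have hmin := isLocalMin_of_deriv_deriv_pos hpos hmax.deriv_eq_zero hcont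
  have hconst : φ =ᶠ[𝓝 x] fun _ => φ x := by
    filter_upwards [hmax, hmin] with y hle hge using le_antisymm hle hge
  simp [hconst.deriv.deriv_eq] at hpos

theorem fderiv_apply_eq_zero_of_isLocalMax_line {v : E} (hf : DifferentiableAt ℝ f z)
    (hmax : IsLocalMax (fun s : ℝ => f (z + s • v)) 0) : fderiv ℝ f z v = 0 :=
  hmax.hasDerivAt_eq_zero (hf.hasFDerivAt.hasLineDerivAt v)

theorem fderiv_fderiv_apply_self_nonpos_of_isLocalMax_line {v : E} (hf : ContDiffAt ℝ 2 f z)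
    (hmax : IsLocalMax (fun s : ℝ => f (z + s • v)) 0) :
    fderiv ℝ (fderiv ℝ f) z v v ≤ 0 := by
  have hline : Tendsto (fun s : ℝ => z + s • v) (𝓝 0) (𝓝 z) :=
    (by fun_prop : Continuous fun s : ℝ => z + s • v).tendsto' 0 z (by simp)
  have first : deriv (fun s : ℝ => f (z + s • v)) =ᶠ[𝓝 0] fun s => fderiv ℝ f (z + s • v) v := by
    filter_upwards [hline.eventually (eventually_differentiableAt_of_contDiffAt_two hf)] with s hs
    have : HasDerivAt (fun s : ℝ => z + s • v) v s := by
      simpa using ((hasDerivAt_id s).smul_const v).const_add z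
    exact (hs.hasFDerivAt.comp_hasDerivAt s this).deriv
  have second : HasDerivAt (fun s : ℝ => fderiv ℝ f (z + s • v) v)
      (fderiv ℝ (fderiv ℝ f) z v v) 0 := by
    simpa [HasLineDerivAt] using ((hasFDerivAt_fderiv_of_contDiffAt_two hf).clm_apply
      (hasFDerivAt_const v z)).hasLineDerivAt v
  rw [← second.deriv, ← first.deriv_eq]
  refine deriv_deriv_nonpos_of_isLocalMax hmax ?_
  exact ContinuousAt.comp (by simpa using hf.continuousAt) (by fun_prop)

end SecondDerivatives

section GraphHeat

variable {ι E : Type*} [Fintype ι] [NormedAddCommGroup E] [NormedSpace ℝ E]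

/-- The gradient of `u` at `z` along the spatial directions `e`, as a vector of partial
derivatives. -/
noncomputable def coordGrad (e : ι → E) (u : E → ℝ) (z : E) : ι → ℝ :=
  fun i => fderiv ℝ u z (e i)

/-- The square of the gradient function of the graph of `u`, as a function on space-time. -/
noncomputable def graphGradFunSq (e : ι → E) (u : E → ℝ) (z : E) : ℝ :=
  gradFunSq (coordGrad e u z)

/-- The linear operator `L f = ∂f/∂τ - ∑ᵢⱼ (δᵢⱼ - pᵢ pⱼ / (1 + |p|²)) Dᵢⱼ f`: the heat operator of a
graph with gradient `p`, with the coefficients frozen at `p`. Space-time is the single space `E`,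
with spatial directions `e` and time direction `τ`. -/
noncomputable def graphHeat (e : ι → E) (τ : E) (p : ι → ℝ) (f : E → ℝ) (z : E) : ℝ :=
  fderiv ℝ f z τ - graphTrace e p (fderiv ℝ (fderiv ℝ f) z)

/-- The graph of `u` moves by mean curvature near the space-time point `z`. -/
def IsGraphMCFAt (e : ι → E) (τ : E) (u : E → ℝ) (z : E) : Prop :=
  ∀ᶠ y in 𝓝 z, graphHeat e τ (coordGrad e u y) u y = 0

variable (e : ι → E) (τ : E) (p : ι → ℝ) {f g u : E → ℝ} {z : E}

theorem graphHeat_sub (hf : ContDiffAt ℝ 2 f z) (hg : ContDiffAt ℝ 2 g z) :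
    graphHeat e τ p (fun y => f y - g y) z = graphHeat e τ p f z - graphHeat e τ p g z := by
  rw [graphHeat, fderiv_fderiv_sub hf hg, graphTrace_sub, fderiv_fun_sub
    (hf.differentiableAt two_ne_zero) (hg.differentiableAt two_ne_zero), sub_apply]
  unfold graphHeat
  ring

theorem graphHeat_const_sub (b : ℝ) :
    graphHeat e τ p (fun y => b - f y) z = -graphHeat e τ p f z := by
  have second : fderiv ℝ (fderiv ℝ fun y => b - f y) z = -fderiv ℝ (fderiv ℝ f) z := by
    rw [← fderiv_fun_neg]
    congr
    ext y : 1
    exact fderiv_const_sub b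
  rw [graphHeat, second, graphTrace_neg, fderiv_const_sub, neg_apply]
  unfold graphHeat
  ring

theorem graphHeat_continuousLinearMap (ℓ : E →L[ℝ] ℝ) : graphHeat e τ p ℓ z = ℓ τ := by
  have : fderiv ℝ (fderiv ℝ ℓ) z = 0 := by
    rw [funext fun y => ℓ.fderiv (x := y), fderiv_const_apply]
  rw [graphHeat, this, map_zero, sub_zero, ℓ.fderiv]

theorem graphHeat_mul (hf : ContDiffAt ℝ 2 f z) (hg : ContDiffAt ℝ 2 g z) :
    graphHeat e τ p (fun y => f y * g y) z = f z * graphHeat e τ p g z +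
      g z * graphHeat e τ p f z - 2 * graphCometric e p (fderiv ℝ f z) (fderiv ℝ g z) := by
  simp only [graphHeat, fderiv_fderiv_mul hf hg, map_add, map_smul, graphTrace_smulRight,
    fderiv_fun_mul (hf.differentiableAt two_ne_zero) (hg.differentiableAt two_ne_zero),
    graphCometric_comm e p (fderiv ℝ g z), add_apply, smul_apply, smul_eq_mul]
  ring

theorem graphHeat_comp {h : ℝ → ℝ} (hh : ContDiffAt ℝ 2 h (f z)) (hf : ContDiffAt ℝ 2 f z) :
    graphHeat e τ p (fun y => h (f y)) z = deriv h (f z) * graphHeat e τ p f z -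
      deriv (deriv h) (f z) * graphCometric e p (fderiv ℝ f z) (fderiv ℝ f z) := by
  have first : fderiv ℝ (fun y => h (f y)) z = deriv h (f z) • fderiv ℝ f z :=
    ((hh.differentiableAt two_ne_zero).hasDerivAt.comp_hasFDerivAt z
      (hf.differentiableAt two_ne_zero).hasFDerivAt).fderiv
  simp only [graphHeat, first, fderiv_fderiv_comp hh hf, map_add, map_smul, graphTrace_smulRight,
    smul_apply, smul_eq_mul]
  ring

theorem graphHeat_sq (hf : ContDiffAt ℝ 2 f z) : graphHeat e τ p (fun y => f y ^ 2) z =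
    2 * (f z * graphHeat e τ p f z - graphCometric e p (fderiv ℝ f z) (fderiv ℝ f z)) := by
  simp only [sq, graphHeat_mul e τ p hf hf]
  ring

theorem graphHeat_inv (hf : ContDiffAt ℝ 2 f z) (h0 : f z ≠ 0) :
    graphHeat e τ p (fun y => (f y)⁻¹) z = -(graphHeat e τ p f z) / f z ^ 2 -
      2 / f z ^ 3 * graphCometric e p (fderiv ℝ f z) (fderiv ℝ f z) := by
  rw [graphHeat_comp e τ p (contDiffAt_inv ℝ h0) hf, deriv_inv, deriv_inv']
  have : deriv (fun x : ℝ => -(x ^ 2)⁻¹) (f z) = 2 / f z ^ 3 := by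
    rw [((hasDerivAt_pow 2 (f z)).fun_inv (pow_ne_zero 2 h0)).fun_neg.deriv]
    field_simp
    ring
  rw [this]
  ring

theorem graphHeat_log (hf : ContDiffAt ℝ 2 f z) (h0 : f z ≠ 0) :
    graphHeat e τ p (fun y => Real.log (f y)) z = graphHeat e τ p f z / f z +
      graphCometric e p (fderiv ℝ f z) (fderiv ℝ f z) / f z ^ 2 := by
  rw [graphHeat_comp e τ p (Real.contDiffAt_log.2 h0) hf, Real.deriv_log, Real.deriv_log',
    deriv_inv]
  ring

theorem graphHeat_gradFunSq {f : ι → E → ℝ} (hf : ∀ k, ContDiffAt ℝ 2 (f k) z) :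
    graphHeat e τ p (fun y => gradFunSq fun k => f k y) z =
      2 * ∑ k, (f k z * graphHeat e τ p (f k) z -
        graphCometric e p (fderiv ℝ (f k) z) (fderiv ℝ (f k) z)) := by
  have hsq (k : ι) : ContDiffAt ℝ 2 (fun y => f k y ^ 2) z := (hf k).pow 2
  have first : fderiv ℝ (fun y => gradFunSq fun k => f k y) =ᶠ[𝓝 z]
      fun y => ∑ k, fderiv ℝ (fun y => f k y ^ 2) y := by
    filter_upwards [eventually_all.2 fun k =>
      eventually_differentiableAt_of_contDiffAt_two (hsq k)] with y hy
    exact (fderiv_const_add 1).trans (fderiv_fun_sum fun k _ => hy k)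
  have second : fderiv ℝ (fderiv ℝ fun y => gradFunSq fun k => f k y) z =
      ∑ k, fderiv ℝ (fderiv ℝ fun y => f k y ^ 2) z := by
    rw [first.fderiv_eq]
    exact fderiv_fun_sum fun k _ => (hasFDerivAt_fderiv_of_contDiffAt_two (hsq k)).differentiableAt
  rw [Finset.mul_sum, ← Finset.sum_congr rfl fun k _ => graphHeat_sq e τ p (hf k), graphHeat,
    first.self_of_nhds, second, map_sum, sum_apply, ← Finset.sum_sub_distrib]
  rfl

theorem graphHeat_nonneg_of_isLocalMax_line (hf : ContDiffAt ℝ 2 f z)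
    (hmax : ∀ v ∈ Submodule.span ℝ (range e), IsLocalMax (fun s : ℝ => f (z + s • v)) 0)
    (htime : 0 ≤ fderiv ℝ f z τ) : 0 ≤ graphHeat e τ p f z := by
  have := graphTrace_nonneg e p (X := -fderiv ℝ (fderiv ℝ f) z) fun v hv => by
    simpa using fderiv_fderiv_apply_self_nonpos_of_isLocalMax_line hf (hmax v hv)
  rw [graphTrace_neg] at this
  unfold graphHeat
  linarith

theorem hasDerivAt_graphTrace {p : ℝ → ι → ℝ} {p' : ι → ℝ} {X : ℝ → E →L[ℝ] E →L[ℝ] ℝ}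
    {X' : E →L[ℝ] E →L[ℝ] ℝ} {s : ℝ} (hp : HasDerivAt p p' s) (hX : HasDerivAt X X' s) :
    HasDerivAt (fun s => graphTrace e (p s) (X s))
      (graphTrace e (p s) X' - (X s (∑ i, p' i • e i) (∑ i, p s i • e i) +
        X s (∑ i, p s i • e i) (∑ i, p' i • e i)) / gradFunSq (p s) +
        2 * (∑ i, p s i * p' i) * X s (∑ i, p s i • e i) (∑ i, p s i • e i) /
          gradFunSq (p s) ^ 2) s := by
  have hp_apply := hasDerivAt_pi.1 hp
  have hP : HasDerivAt (fun s => ∑ i, p s i • e i) (∑ i, p' i • e i) s :=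
    HasDerivAt.fun_sum fun i _ => (hp_apply i).smul_const (e i)
  have hW : HasDerivAt (fun s => gradFunSq (p s)) (∑ i, 2 * p s i * p' i) s := by
    refine (HasDerivAt.fun_sum fun i _ => ?_).const_add 1
    simpa using (hp_apply i).fun_pow 2
  have hdiag (i : ι) : HasDerivAt (fun s => X s (e i) (e i)) (X' (e i) (e i)) s := by
    simpa using (hX.clm_apply (hasDerivAt_const s (e i))).clm_apply (hasDerivAt_const s (e i))
  refine ((HasDerivAt.fun_sum fun i _ => hdiag i).sub
    (((hX.clm_apply hP).clm_apply hP).div hW (gradFunSq_pos (p s)).ne')).congr_deriv ?_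
  have := (gradFunSq_pos (p s)).ne'
  simp only [graphTrace_apply, add_apply, mul_assoc, ← Finset.mul_sum]
  field_simp
  ring

end GraphHeat

section Evolution

variable {ι E : Type*} [Fintype ι] [NormedAddCommGroup E] [NormedSpace ℝ E] {e : ι → E} {τ : E}
  {u : E → ℝ} {z : E}

theorem contDiffAt_fderiv_apply (hu : ContDiffAt ℝ 3 u z) (v : E) :
    ContDiffAt ℝ 2 (fun y => fderiv ℝ u y v) z :=
  (hu.fderiv_right (m := 2) (by norm_num)).clm_apply contDiffAt_const

theorem contDiffAt_graphGradFunSq (hu : ContDiffAt ℝ 3 u z) :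
    ContDiffAt ℝ 2 (graphGradFunSq e u) z :=
  contDiffAt_const.add (ContDiffAt.sum fun i _ => (contDiffAt_fderiv_apply hu (e i)).pow 2)

theorem fderiv_graphGradFunSq (hu : ContDiffAt ℝ 2 u z) :
    fderiv ℝ (graphGradFunSq e u) z =
      (2 : ℝ) • ∑ i, coordGrad e u z i • fderiv ℝ (fderiv ℝ u) z (e i) := by
  have hpartial (i : ι) : HasFDerivAt (fun y => fderiv ℝ u y (e i))
      (fderiv ℝ (fderiv ℝ u) z (e i)) z := by
    rw [← fderiv_fderiv_apply hu (e i)]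
    exact ((hu.fderiv_right (m := 1) (by norm_num)).clm_apply
      contDiffAt_const).differentiableAt one_ne_zero |>.hasFDerivAt
  refine ((HasFDerivAt.fun_sum fun i _ => (hpartial i).pow 2).const_add 1).fderiv.trans ?_
  simp [Finset.smul_sum, mul_smul, coordGrad]

theorem IsGraphMCFAt.fderiv_fderiv_apply_time (hmcf : IsGraphMCFAt e τ u z)
    (hu : ContDiffAt ℝ 3 u z) (v : E) {p : ι → ℝ} {X : E →L[ℝ] E →L[ℝ] ℝ}
    (hp : coordGrad e u z = p) (hX : fderiv ℝ (fderiv ℝ u) z = X) :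
    X v τ = graphTrace e p (fderiv ℝ (fderiv ℝ (fderiv ℝ u)) z v) -
      (X (∑ i, X v (e i) • e i) (∑ i, p i • e i) + X (∑ i, p i • e i) (∑ i, X v (e i) • e i)) /
        gradFunSq p +
      2 * (∑ i, p i * X v (e i)) * X (∑ i, p i • e i) (∑ i, p i • e i) / gradFunSq p ^ 2 := by
  have hline : Tendsto (fun s : ℝ => z + s • v) (𝓝 0) (𝓝 z) :=
    (by fun_prop : Continuous fun s : ℝ => z + s • v).tendsto' 0 z (by simp)
  have hfirst (w : E) : HasDerivAt (fun s : ℝ => fderiv ℝ u (z + s • v) w) (X v w) 0 := by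
    simpa [HasLineDerivAt, hX] using ((hasFDerivAt_fderiv_of_contDiffAt_two
      (hu.of_le (by norm_num))).clm_apply (hasFDerivAt_const w z)).hasLineDerivAt v
  have hgrad : HasDerivAt (fun s : ℝ => coordGrad e u (z + s • v)) (fun i => X v (e i)) 0 :=
    hasDerivAt_pi.2 fun i => hfirst (e i)
  have hhess : HasDerivAt (fun s : ℝ => fderiv ℝ (fderiv ℝ u) (z + s • v))
      (fderiv ℝ (fderiv ℝ (fderiv ℝ u)) z v) 0 :=
    (hasFDerivAt_fderiv_of_contDiffAt_two (hu.fderiv_right (m := 2) (by norm_num))).hasLineDerivAt v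
  have hflow : (fun s : ℝ => fderiv ℝ u (z + s • v) τ) =ᶠ[𝓝 0] fun s =>
      graphTrace e (coordGrad e u (z + s • v)) (fderiv ℝ (fderiv ℝ u) (z + s • v)) :=
    (hline.eventually hmcf).mono fun s hs => sub_eq_zero.1 hs
  simpa only [zero_smul, add_zero, hp, hX] using
    (hfirst τ).unique ((hasDerivAt_graphTrace e hgrad hhess).congr_of_eventuallyEq hflow)

theorem IsGraphMCFAt.graphHeat_fderiv_apply (hmcf : IsGraphMCFAt e τ u z)
    (hu : ContDiffAt ℝ 3 u z) (v : E) :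
    graphHeat e τ (coordGrad e u z) (fun y => fderiv ℝ u y v) z =
      -(2 / gradFunSq (coordGrad e u z)) * graphCometric e (coordGrad e u z)
        (∑ i, coordGrad e u z i • fderiv ℝ (fderiv ℝ u) z (e i)) (fderiv ℝ (fderiv ℝ u) z v) := by
  have hu₂ : ContDiffAt ℝ 2 u z := hu.of_le (by norm_num)
  have hflow := hmcf.fderiv_fderiv_apply_time hu v rfl rfl
  rw [graphHeat, fderiv_fderiv_apply hu₂, fderiv_fderiv_fderiv_apply hu]
  have hsymm := fderiv_fderiv_apply_comm hu₂
  set X := fderiv ℝ (fderiv ℝ u) z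
  set p := coordGrad e u z
  set P := ∑ i, p i • e i with hP
  have hXP : ∑ i, p i • X (e i) = X P := by simp only [hP, map_sum, map_smul]
  have hcontract (w : E) : ∑ i, p i * X w (e i) = X w P := by
    simp only [hP, map_sum, map_smul, smul_eq_mul]
  have hmixed : X P (∑ i, X v (e i) • e i) = ∑ i, X P (e i) * X v (e i) := by
    simp only [map_sum, map_smul, smul_eq_mul, mul_comm]
  rw [hflow, hXP, graphCometric_apply, hcontract, hcontract, hsymm _ P, hmixed]
  field [(gradFunSq_pos p).ne']

theorem IsGraphMCFAt.graphHeat_graphGradFunSq (hmcf : IsGraphMCFAt e τ u z)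
    (hu : ContDiffAt ℝ 3 u z) :
    graphHeat e τ (coordGrad e u z) (graphGradFunSq e u) z =
      -(graphCometric e (coordGrad e u z) (fderiv ℝ (graphGradFunSq e u) z)
        (fderiv ℝ (graphGradFunSq e u) z) / graphGradFunSq e u z) -
      2 * ∑ i, graphCometric e (coordGrad e u z) (fderiv ℝ (fderiv ℝ u) z (e i))
        (fderiv ℝ (fderiv ℝ u) z (e i)) := by
  have hu₂ : ContDiffAt ℝ 2 u z := hu.of_le (by norm_num)
  set B := graphCometric e (coordGrad e u z)
  set S := ∑ i, coordGrad e u z i • fderiv ℝ (fderiv ℝ u) z (e i) with hS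
  have hcontract : ∑ i, coordGrad e u z i * B S (fderiv ℝ (fderiv ℝ u) z (e i)) = B S S := by
    simp only [hS, map_sum, map_smul, smul_eq_mul]
  have hpartial (i : ι) : coordGrad e u z i *
      graphHeat e τ (coordGrad e u z) (fun y => fderiv ℝ u y (e i)) z =
        -(2 / graphGradFunSq e u z) *
          (coordGrad e u z i * B S (fderiv ℝ (fderiv ℝ u) z (e i))) := by
    rw [hmcf.graphHeat_fderiv_apply hu, graphGradFunSq]
    ring
  calc graphHeat e τ (coordGrad e u z) (graphGradFunSq e u) z
    _ = 2 * ∑ i, (coordGrad e u z i *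
          graphHeat e τ (coordGrad e u z) (fun y => fderiv ℝ u y (e i)) z -
          B (fderiv ℝ (fderiv ℝ u) z (e i)) (fderiv ℝ (fderiv ℝ u) z (e i))) := by
      simp only [← fderiv_fderiv_apply hu₂]
      exact graphHeat_gradFunSq e τ _ fun i => contDiffAt_fderiv_apply hu (e i)
    _ = -(4 / graphGradFunSq e u z) * B S S -
          2 * ∑ i, B (fderiv ℝ (fderiv ℝ u) z (e i)) (fderiv ℝ (fderiv ℝ u) z (e i)) := by
      rw [Finset.sum_sub_distrib, Finset.sum_congr rfl fun i _ => hpartial i, ← Finset.mul_sum,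
        hcontract]
      ring
    _ = _ := by
      rw [fderiv_graphGradFunSq hu₂]
      simp only [map_smul, LinearMap.smul_apply, smul_eq_mul, ← hS]
      ring

theorem IsGraphMCFAt.graphHeat_log_graphGradFunSq_le (hmcf : IsGraphMCFAt e τ u z)
    (hu : ContDiffAt ℝ 3 u z) :
    graphHeat e τ (coordGrad e u z) (fun y => Real.log (graphGradFunSq e u y)) z ≤
      -(graphCometric e (coordGrad e u z) (fderiv ℝ (fun y => Real.log (graphGradFunSq e u y)) z)
        (fderiv ℝ (fun y => Real.log (graphGradFunSq e u y)) z) / 2) := by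
  have hW := gradFunSq_pos (coordGrad e u z)
  have hWd := contDiffAt_graphGradFunSq (e := e) hu
  have hlog : fderiv ℝ (fun y => Real.log (graphGradFunSq e u y)) z =
      (graphGradFunSq e u z)⁻¹ • fderiv ℝ (graphGradFunSq e u) z :=
    fderiv.log (hWd.differentiableAt two_ne_zero) hW.ne'
  rw [graphHeat_log e τ _ hWd hW.ne', hmcf.graphHeat_graphGradFunSq hu, hlog,
    fderiv_graphGradFunSq (hu.of_le (by norm_num))]
  have hcauchy := graphCometric_sum_smul_self_le e (coordGrad e u z)
    fun i => fderiv ℝ (fderiv ℝ u) z (e i)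
  rw [← div_le_iff₀' hW] at hcauchy
  simp only [map_smul, LinearMap.smul_apply, smul_eq_mul, graphGradFunSq]
  have := mul_le_mul_of_nonneg_left hcauchy (div_pos two_pos hW).le
  rw [← sub_nonneg] at this ⊢
  refine this.trans_eq ?_
  field [hW.ne']

end Evolution

section EstimateDefect

/-- The logarithmic defect `log W - log t - w² / t` of the estimate `W ≤ t * exp (w² / t)`. -/
noncomputable def estimateDefect (W t w : ℝ) : ℝ :=
  Real.log W - Real.log t - w ^ 2 / t

theorem estimateDefect_nonpos_iff {W t w : ℝ} (hW : 0 < W) (ht : 0 < t) :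
    estimateDefect W t w ≤ 0 ↔ W ≤ t * Real.exp (w ^ 2 / t) := by
  rw [estimateDefect, sub_sub, sub_nonpos, ← Real.log_exp (w ^ 2 / t),
    ← Real.log_mul ht.ne' (Real.exp_pos _).ne', Real.log_le_log_iff hW (by positivity),
    Real.log_exp]

theorem pow_four_div_lt_of_estimateDefect_pos {W t w : ℝ} (hW : 0 < W) (ht : 0 < t)
    (hpos : 0 < estimateDefect W t w) : w ^ 4 / (2 * t) < W := by
  rw [← not_le, estimateDefect_nonpos_iff hW ht, not_le] at hpos
  have hexp := Real.quadratic_le_exp_of_nonneg (x := w ^ 2 / t) (by positivity)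
  calc w ^ 4 / (2 * t) = t * ((w ^ 2 / t) ^ 2 / 2) := by field_simp
    _ ≤ t * Real.exp (w ^ 2 / t) := by
      gcongr
      have : 0 ≤ w ^ 2 / t := by positivity
      linarith
    _ < W := hpos

theorem two_lt_of_estimateDefect_pos {W t w m : ℝ} (hW : 0 < W) (ht : 0 < t) (hm : 0 < m)
    (hmw : m ≤ w) (htm : t < m ^ 4 / 4) (hpos : 0 < estimateDefect W t w) : 2 < W :=
  calc 2 < m ^ 4 / (2 * t) := by
        rw [lt_div_iff₀ (mul_pos two_pos ht)]
        linarith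
    _ ≤ w ^ 4 / (2 * t) := by gcongr
    _ < W := pow_four_div_lt_of_estimateDefect_pos hW ht hpos

theorem eventually_forall_estimateDefect_nonpos {m C : ℝ} (hm : 0 < m) : ∀ᶠ t in 𝓝[>] (0 : ℝ),
    ∀ W w, 0 < W → W ≤ C → m ≤ w → estimateDefect W t w ≤ 0 := by
  have hlim : Tendsto (fun t : ℝ => m ^ 4 / 2 * t⁻¹) (𝓝[>] 0) atTop :=
    tendsto_inv_nhdsGT_zero.const_mul_atTop (by positivity)
  filter_upwards [self_mem_nhdsWithin, hlim.eventually_ge_atTop C] with t (ht : 0 < t) htC W w hW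
    hWC hw
  by_contra! hpos
  refine (pow_four_div_lt_of_estimateDefect_pos hW ht hpos).not_ge ?_
  calc W ≤ m ^ 4 / 2 * t⁻¹ := hWC.trans htC
    _ = m ^ 4 / (2 * t) := by field
    _ ≤ w ^ 4 / (2 * t) := by gcongr

variable {ι E : Type*} [Fintype ι] [NormedAddCommGroup E] [NormedSpace ℝ E] {e : ι → E} {τ : E}
  {u : E → ℝ} {z : E} {θ : E →L[ℝ] ℝ} {b : ℝ}

theorem graphCometric_coordGrad_self :
    graphCometric e (coordGrad e u z) (fderiv ℝ u z) (fderiv ℝ u z) =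
      1 - 1 / graphGradFunSq e u z :=
  graphCometric_self_of_apply_eq fun _ => rfl

theorem contDiffAt_log_graphGradFunSq (hu : ContDiffAt ℝ 3 u z) :
    ContDiffAt ℝ 2 (fun y => Real.log (graphGradFunSq e u y)) z :=
  (contDiffAt_graphGradFunSq hu).log (gradFunSq_pos _).ne'

theorem contDiffAt_sq_div (hu : ContDiffAt ℝ 2 u z) (ht : θ z ≠ 0) :
    ContDiffAt ℝ 2 (fun y => (b - u y) ^ 2 / θ y) z :=
  ((contDiffAt_const.sub hu).pow 2).div θ.contDiff.contDiffAt ht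

theorem contDiffAt_estimateDefect (hu : ContDiffAt ℝ 3 u z) (ht : θ z ≠ 0) :
    ContDiffAt ℝ 2 (fun y => estimateDefect (graphGradFunSq e u y) (θ y) (b - u y)) z :=
  ((contDiffAt_log_graphGradFunSq hu).sub (θ.contDiff.contDiffAt.log ht)).sub
    (contDiffAt_sq_div (hu.of_le (by norm_num)) ht)

theorem fderiv_estimateDefect_apply (hu : ContDiffAt ℝ 3 u z) (ht : θ z ≠ 0) {v : E}
    (hv : θ v = 0) :
    fderiv ℝ (fun y => estimateDefect (graphGradFunSq e u y) (θ y) (b - u y)) z v =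
      fderiv ℝ (fun y => Real.log (graphGradFunSq e u y)) z v +
        2 * (b - u z) / θ z * fderiv ℝ u z v := by
  have hlog := (contDiffAt_log_graphGradFunSq (e := e) hu).differentiableAt two_ne_zero
  have hdu := hu.differentiableAt three_ne_zero
  have hφ := (hlog.hasFDerivAt.sub (θ.hasFDerivAt.log ht)).sub
    (((hdu.hasFDerivAt.const_sub b).pow 2).mul
      ((hasDerivAt_inv ht).comp_hasFDerivAt z θ.hasFDerivAt))
  refine (DFunLike.congr_fun hφ.fderiv v).trans ?_
  simp [hv]
  ring

theorem graphHeat_sq_div {p : ι → ℝ} (hu : ContDiffAt ℝ 2 u z) (hflow : graphHeat e τ p u z = 0)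
    (hθ : ∀ i, θ (e i) = 0) (hτ : θ τ = 1) (ht : θ z ≠ 0) :
    graphHeat e τ p (fun y => (b - u y) ^ 2 / θ y) z =
      -(2 * graphCometric e p (fderiv ℝ u z) (fderiv ℝ u z) / θ z) -
        ((b - u z) / θ z) ^ 2 := by
  have hw : ContDiffAt ℝ 2 (fun y => b - u y) z := contDiffAt_const.sub hu
  have hθinv : ContDiffAt ℝ 2 (fun y => (θ y)⁻¹) z := θ.contDiff.contDiffAt.inv ht
  have hinv : fderiv ℝ (fun y => (θ y)⁻¹) z = -(θ z ^ 2)⁻¹ • θ :=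
    (((hasDerivAt_inv ht).comp_hasFDerivAt z θ.hasFDerivAt)).fderiv
  have hspatial (c : ℝ) (i : ι) : (c • θ) (e i) = 0 := by simp [hθ]
  simp only [div_eq_mul_inv]
  rw [graphHeat_mul e τ p (hw.pow 2) hθinv, graphHeat_sq e τ p hw,
    graphHeat_const_sub, hflow, graphHeat_inv e τ p θ.contDiff.contDiffAt ht,
    graphHeat_continuousLinearMap, hτ, hinv, θ.fderiv,
    graphCometric_eq_zero_of_apply_eq_zero hθ, graphCometric_eq_zero_of_apply_eq_zero (hspatial _),
    fderiv_const_sub]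
  simp
  ring

theorem IsGraphMCFAt.graphHeat_estimateDefect (hmcf : IsGraphMCFAt e τ u z)
    (hu : ContDiffAt ℝ 3 u z) (hθ : ∀ i, θ (e i) = 0) (hτ : θ τ = 1) (ht : θ z ≠ 0) :
    graphHeat e τ (coordGrad e u z)
        (fun y => estimateDefect (graphGradFunSq e u y) (θ y) (b - u y)) z =
      graphHeat e τ (coordGrad e u z) (fun y => Real.log (graphGradFunSq e u y)) z +
        (1 - 2 / graphGradFunSq e u z) / θ z + ((b - u z) / θ z) ^ 2 := by
  have hlog := contDiffAt_log_graphGradFunSq (e := e) hu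
  have hclock : ContDiffAt ℝ 2 θ z := θ.contDiff.contDiffAt
  have hu₂ : ContDiffAt ℝ 2 u z := hu.of_le (by norm_num)
  unfold estimateDefect
  rw [graphHeat_sub e τ _ (hlog.sub (hclock.log ht)) (contDiffAt_sq_div hu₂ ht),
    graphHeat_sub e τ _ hlog (hclock.log ht), graphHeat_log e τ _ hclock ht,
    graphHeat_continuousLinearMap, hτ, θ.fderiv, graphCometric_eq_zero_of_apply_eq_zero hθ,
    graphHeat_sq_div hu₂ hmcf.self_of_nhds hθ hτ ht, graphCometric_coordGrad_self]
  ring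

theorem IsGraphMCFAt.mul_nonpos_of_isLocalMax (hmcf : IsGraphMCFAt e τ u z)
    (hu : ContDiffAt ℝ 3 u z) (hθ : ∀ i, θ (e i) = 0) (hτ : θ τ = 1) (ht : 0 < θ z) {φ : E → ℝ}
    (hφ : φ = fun y => estimateDefect (graphGradFunSq e u y) (θ y) (b - u y))
    (hmax : ∀ v ∈ Submodule.span ℝ (range e), IsLocalMax (fun s : ℝ => φ (z + s • v)) 0)
    (htime : 0 ≤ fderiv ℝ φ z τ) :
    (1 - 2 / graphGradFunSq e u z) * ((b - u z) ^ 2 - θ z) ≤ 0 := by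
  have hφd : ContDiffAt ℝ 2 φ z := hφ ▸ contDiffAt_estimateDefect hu ht.ne'
  have hcritical (i : ι) : fderiv ℝ (fun y => Real.log (graphGradFunSq e u y)) z (e i) =
      -(2 * (b - u z) / θ z) * fderiv ℝ u z (e i) := by
    have hzero := fderiv_apply_eq_zero_of_isLocalMax_line (hφd.differentiableAt two_ne_zero)
      (hmax _ (Submodule.subset_span ⟨i, rfl⟩))
    rw [hφ, fderiv_estimateDefect_apply hu ht.ne' (hθ i)] at hzero
    linarith
  have hheat := graphHeat_nonneg_of_isLocalMax_line e τ (coordGrad e u z) hφd hmax htime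
  have hlog := hmcf.graphHeat_log_graphGradFunSq_le hu
  rw [graphCometric_self_of_apply_eq_mul hcritical, graphCometric_coordGrad_self] at hlog
  rw [hφ, hmcf.graphHeat_estimateDefect hu hθ hτ ht.ne'] at hheat
  have hW : graphGradFunSq e u z ≠ 0 := (gradFunSq_pos _).ne'
  suffices (1 - 2 / graphGradFunSq e u z) * ((b - u z) ^ 2 - θ z) / θ z ^ 2 ≤ 0 by
    simpa using (div_le_iff₀ (pow_pos ht 2)).1 this
  calc (1 - 2 / graphGradFunSq e u z) * ((b - u z) ^ 2 - θ z) / θ z ^ 2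
      = (-(2 * (b - u z) / θ z)) ^ 2 * (1 - 1 / graphGradFunSq e u z) / 2 -
          (1 - 2 / graphGradFunSq e u z) / θ z - ((b - u z) / θ z) ^ 2 := by field [ht.ne']
    _ ≤ 0 := by linarith

end EstimateDefect

section Slab

theorem fderiv_time_nonneg_of_isMaxOn {F : Type*} [NormedAddCommGroup F] [NormedSpace ℝ F]
    {φ : F × ℝ → ℝ} {z : F × ℝ} {ε : ℝ} (hε : ε < z.2) (hφ : DifferentiableAt ℝ φ z)
    (hmax : IsMaxOn φ (univ ×ˢ Icc ε z.2) z) : 0 ≤ fderiv ℝ φ z (0, 1) := by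
  have hmem : z ∈ (univ : Set F) ×ˢ Icc ε z.2 := ⟨mem_univ _, hε.le, le_rfl⟩
  have hsegment : segment ℝ z (z + (0, ε - z.2)) ⊆ univ ×ˢ Icc ε z.2 :=
    (convex_univ.prod (convex_Icc ε z.2)).segment_subset hmem (by simp [hε.le])
  have hback : fderiv ℝ φ z (0, ε - z.2) ≤ 0 := hmax.localize.hasFDerivWithinAt_nonpos
    hφ.hasFDerivAt.hasFDerivWithinAt (mem_posTangentConeAt_of_segment_subset hsegment)
  rw [← mul_one (ε - z.2), ← smul_eq_mul, ← smul_zero (ε - z.2), ← Prod.smul_mk, map_smul,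
    smul_eq_mul] at hback
  exact nonneg_of_mul_nonpos_right hback (sub_neg.2 hε)

theorem isLocalMax_line_of_isMaxOn {ι F : Type*} [NormedAddCommGroup F] [NormedSpace ℝ F]
    {φ : F × ℝ → ℝ} {e : ι → F × ℝ} {z : F × ℝ} {ε : ℝ} (hε : ε ≤ z.2)
    (hmax : IsMaxOn φ (univ ×ˢ Icc ε z.2) z) (he : ∀ i, (e i).2 = 0) {v : F × ℝ}
    (hv : v ∈ Submodule.span ℝ (range e)) : IsLocalMax (fun s : ℝ => φ (z + s • v)) 0 := by
  have hspatial : v.2 = 0 := (Submodule.span_le (p := LinearMap.ker (LinearMap.snd ℝ F ℝ))).2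
    (range_subset_iff.2 he) hv
  refine Eventually.of_forall fun s => ?_
  simpa using hmax (⟨mem_univ _, by simp [hspatial, hε]⟩ : z + s • v ∈ univ ×ˢ Icc ε z.2)

theorem nonpos_of_forall_not_isMaxOn {F : Type*} [TopologicalSpace F] {Q : F × ℝ → ℝ} {K : Set F}
    {T : ℝ} (hK : IsCompact K) (hQ : ContinuousOn Q (univ ×ˢ Ioc 0 T))
    (hQK : ∀ x, ∃ y ∈ K, ∀ t ∈ Ioc 0 T, Q (x, t) = Q (y, t))
    (hinitial : ∃ᶠ ε in 𝓝[>] (0 : ℝ), ∀ x, Q (x, ε) ≤ 0)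
    (hmax : ∀ z : F × ℝ, z.2 ∈ Ioo 0 T → 0 < Q z → ∀ ε ∈ Ioo 0 z.2,
      ¬IsMaxOn Q (univ ×ˢ Icc ε z.2) z) (x : F) {t : ℝ} (ht : t ∈ Ioc 0 T) : Q (x, t) ≤ 0 := by
  suffices hopen : ∀ t ∈ Ioo 0 T, Q (x, t) ≤ 0 by
    have hcont : ContinuousWithinAt (fun s => Q (x, s)) (Ioo 0 t) t :=
      (hQ.comp (by fun_prop) fun s hs => ⟨mem_univ x, hs⟩ : ContinuousOn _ (Ioc 0 T)) t ht |>.mono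
        fun s hs => ⟨hs.1, hs.2.le.trans ht.2⟩
    refine hcont.closure_le ?_ continuousWithinAt_const
      fun s hs => hopen s ⟨hs.1, hs.2.trans_le ht.2⟩
    simp [closure_Ioo ht.1.ne, ht.1.le]
  intro t ht
  by_contra! hpos
  obtain ⟨ε, hinit, hε⟩ := (hinitial.and_eventually (Ioo_mem_nhdsGT ht.1)).exists
  have hslab : (univ : Set F) ×ˢ Icc ε t ⊆ univ ×ˢ Ioc 0 T :=
    prod_mono_right fun s hs => ⟨hε.1.trans_le hs.1, hs.2.trans ht.2.le⟩
  obtain ⟨y, hy, hxy⟩ := hQK x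
  obtain ⟨z, hz, hzmax⟩ := (hK.prod isCompact_Icc).exists_isMaxOn ⟨(y, t), hy, hε.2.le, le_rfl⟩
    (hQ.mono ((prod_mono_left (subset_univ K)).trans hslab))
  have hzpos : 0 < Q z :=
    hpos.trans_le ((hxy t ⟨ht.1, ht.2.le⟩).trans_le (hzmax ⟨hy, hε.2.le, le_rfl⟩))
  have hεz : ε < z.2 := hz.2.1.lt_of_ne fun h => (hinit z.1).not_gt (h ▸ hzpos)
  refine hmax z ⟨hε.1.trans hεz, hz.2.2.trans_lt ht.2⟩ hzpos ε ⟨hε.1, hεz⟩ fun w hw => ?_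
  have hwt : w.2 ∈ Icc ε t := ⟨hw.2.1, hw.2.2.trans hz.2.2⟩
  obtain ⟨y', hy', hwy'⟩ := hQK w.1
  exact (hwy' w.2 (hslab ⟨mem_univ w.1, hwt⟩).2).trans_le (hzmax ⟨hy', hwt⟩)

end Slab

section InteriorMaximum

variable {ι F : Type*} [Fintype ι] [NormedAddCommGroup F] [NormedSpace ℝ F] {e : ι → F × ℝ}
  {u : F × ℝ → ℝ} {z : F × ℝ}

theorem IsGraphMCFAt.not_isMaxOn_estimateDefect (hmcf : IsGraphMCFAt e (0, 1) u z)
    (hu : ContDiffAt ℝ 3 u z) (he : ∀ i, (e i).2 = 0) {b m ε : ℝ} (hm : 0 < m) (ht : 0 < z.2)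
    (htm : z.2 < min (m ^ 2) (m ^ 4 / 4)) (hbound : m ≤ b - u z) (hε : ε < z.2)
    (hpos : 0 < estimateDefect (graphGradFunSq e u z) z.2 (b - u z)) :
    ¬IsMaxOn (fun y => estimateDefect (graphGradFunSq e u y) y.2 (b - u y))
      (univ ×ˢ Icc ε z.2) z := by
  intro hmax
  have hdiff : ContDiffAt ℝ 2 (fun y => estimateDefect (graphGradFunSq e u y) y.2 (b - u y)) z :=
    contDiffAt_estimateDefect (θ := ContinuousLinearMap.snd ℝ F ℝ) hu ht.ne'
  have hmax_ineq := hmcf.mul_nonpos_of_isLocalMax (θ := ContinuousLinearMap.snd ℝ F ℝ) hu he rfl ht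
    rfl (fun v hv => isLocalMax_line_of_isMaxOn hε.le hmax he hv)
    (fderiv_time_nonneg_of_isMaxOn hε (hdiff.differentiableAt two_ne_zero) hmax)
  have hW := gradFunSq_pos (coordGrad e u z)
  have hsteep : 2 < graphGradFunSq e u z :=
    two_lt_of_estimateDefect_pos hW ht hm hbound (htm.trans_le (min_le_right _ _)) hpos
  have hheight : z.2 < (b - u z) ^ 2 := (htm.trans_le (min_le_left _ _)).trans_le (by gcongr)
  exact hmax_ineq.not_gt (mul_pos (sub_pos.2 ((div_lt_one hW).2 hsteep)) (sub_pos.2 hheight))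

end InteriorMaximum

section Periodic

variable {E α : Type*}

theorem periodic_of_mem_span_int [AddCommGroup E] {f : E → α} {S : Set E}
    (hf : ∀ c ∈ S, Periodic f c) {c : E} (hc : c ∈ Submodule.span ℤ S) : Periodic f c := by
  induction hc using Submodule.span_induction with
  | mem c hc => exact hf c hc
  | zero => intro x; rw [add_zero]
  | add c d _ _ hc hd => exact hc.add_period hd
  | smul n c _ hc => exact hc.zsmul n

theorem exists_isCompact_forall_exists_eq_of_periodic {ι : Type*} [Finite ι] [NormedAddCommGroup E]
    [NormedSpace ℝ E] (b : Module.Basis ι ℝ E) {f : E → α} (hf : ∀ i, Periodic f (b i)) :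
    ∃ K : Set E, IsCompact K ∧ ∀ x, ∃ y ∈ K, f x = f y := by
  have := b.finiteDimensional_of_finite
  have := FiniteDimensional.proper_real E
  have := Fintype.ofFinite ι
  refine ⟨closure (ZSpan.fundamentalDomain b),
    (ZSpan.fundamentalDomain_isBounded b).isCompact_closure,
    fun x => ⟨ZSpan.fract b x, subset_closure (ZSpan.fract_mem_fundamentalDomain b x), ?_⟩⟩
  exact ((periodic_of_mem_span_int (forall_mem_range.2 hf) (ZSpan.floor b x).2).sub_eq x).symm

end Periodic

section PeriodicFlow

variable {ι : Type*}

/-- The spatial coordinate directions of space-time `ℝⁿ × ℝ`. -/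
def spaceDir [DecidableEq ι] (i : ι) : (ι → ℝ) × ℝ :=
  (Pi.single i 1, 0)

variable [Fintype ι] [DecidableEq ι]

/-- Graphical mean curvature flow of class `C³` on `ℝⁿ × [0, T]`, where `ut`, `gu` and `hu` are the
time derivative, the spatial gradient and the spatial Hessian of `u`. -/
structure IsGraphMCF (T : ℝ) (u ut : (ι → ℝ) → ℝ → ℝ) (gu : (ι → ℝ) → ℝ → ι → ℝ)
    (hu : (ι → ℝ) → ℝ → ι → ι → ℝ) : Prop where
  contDiffOn : ContDiffOn ℝ 3 (fun z : (ι → ℝ) × ℝ => u z.1 z.2) (univ ×ˢ Icc 0 T)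
  hasDerivWithinAt_time : ∀ x, ∀ t ∈ Icc 0 T,
    HasDerivWithinAt (fun s => u x s) (ut x t) (Icc 0 T) t
  hasDerivAt_space : ∀ x, ∀ t ∈ Icc 0 T, ∀ i,
    HasDerivAt (fun s : ℝ => u (x + s • Pi.single i 1) t) (gu x t i) 0
  hasDerivAt_grad : ∀ x, ∀ t ∈ Icc 0 T, ∀ i j,
    HasDerivAt (fun s : ℝ => gu (x + s • Pi.single i 1) t j) (hu x t i j) 0
  flow : ∀ x, ∀ t ∈ Icc 0 T, ut x t = ∑ i, ∑ j, ((if i = j then (1 : ℝ) else 0) -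
    gu x t i * gu x t j / (1 + ∑ k, gu x t k ^ 2)) * hu x t i j

namespace IsGraphMCF

variable {T : ℝ} {u ut : (ι → ℝ) → ℝ → ℝ} {gu : (ι → ℝ) → ℝ → ι → ℝ}
  {hu : (ι → ℝ) → ℝ → ι → ι → ℝ} {z : (ι → ℝ) × ℝ}

theorem neg (h : IsGraphMCF T u ut gu hu) : IsGraphMCF T (-u) (-ut) (-gu) (-hu) where
  contDiffOn := h.contDiffOn.neg
  hasDerivWithinAt_time x t ht := (h.hasDerivWithinAt_time x t ht).neg
  hasDerivAt_space x t ht i := (h.hasDerivAt_space x t ht i).neg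
  hasDerivAt_grad x t ht i j := (h.hasDerivAt_grad x t ht i j).neg
  flow x t ht := by simp [h.flow x t ht]

theorem contDiffAt (h : IsGraphMCF T u ut gu hu) (hz : z.2 ∈ Ioo 0 T) :
    ContDiffAt ℝ 3 (fun y : (ι → ℝ) × ℝ => u y.1 y.2) z :=
  h.contDiffOn.contDiffAt (prod_mem_nhds univ_mem (Icc_mem_nhds hz.1 hz.2))

theorem hasLineDerivAt_spaceDir (h : IsGraphMCF T u ut gu hu) (hz : z.2 ∈ Icc 0 T) (i : ι) :
    HasLineDerivAt ℝ (fun y : (ι → ℝ) × ℝ => u y.1 y.2) (gu z.1 z.2 i) z (spaceDir i) := by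
  simpa [HasLineDerivAt, spaceDir] using h.hasDerivAt_space z.1 z.2 hz i

theorem coordGrad_eq (h : IsGraphMCF T u ut gu hu) (hz : z.2 ∈ Ioo 0 T) :
    coordGrad spaceDir (fun y : (ι → ℝ) × ℝ => u y.1 y.2) z = gu z.1 z.2 := by
  ext i
  rw [coordGrad, ← ((h.contDiffAt hz).differentiableAt three_ne_zero).lineDeriv_eq_fderiv]
  exact (h.hasLineDerivAt_spaceDir (Ioo_subset_Icc_self hz) i).lineDeriv

theorem fderiv_fderiv_spaceDir (h : IsGraphMCF T u ut gu hu) (hz : z.2 ∈ Ioo 0 T) (i j : ι) :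
    fderiv ℝ (fderiv ℝ fun y : (ι → ℝ) × ℝ => u y.1 y.2) z (spaceDir i) (spaceDir j) =
      hu z.1 z.2 i j := by
  have hpartial := (contDiffAt_fderiv_apply (h.contDiffAt hz) (spaceDir j)).differentiableAt
    two_ne_zero
  have hu₂ := (h.contDiffAt hz).of_le (m := 2) (by norm_num)
  rw [fderiv_fderiv_apply_comm hu₂, ← fderiv_fderiv_apply hu₂, ← hpartial.lineDeriv_eq_fderiv]
  refine HasLineDerivAt.lineDeriv ?_
  refine (h.hasDerivAt_grad z.1 z.2 (Ioo_subset_Icc_self hz) i j).congr_of_eventuallyEq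
    (Eventually.of_forall fun s => ?_)
  have hs : z + s • spaceDir i = (z.1 + s • Pi.single i 1, z.2) := by ext <;> simp [spaceDir]
  simp only [hs]
  exact congrFun (h.coordGrad_eq (z := (z.1 + s • Pi.single i 1, z.2)) hz) j

theorem fderiv_time (h : IsGraphMCF T u ut gu hu) (hz : z.2 ∈ Ioo 0 T) :
    fderiv ℝ (fun y : (ι → ℝ) × ℝ => u y.1 y.2) z (0, 1) = ut z.1 z.2 := by
  have hline : HasDerivAt (fun t : ℝ => (z.1, t)) (0, 1) z.2 :=
    (hasDerivAt_const z.2 z.1).prodMk (hasDerivAt_id z.2)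
  have hfderiv := ((h.contDiffAt hz).differentiableAt three_ne_zero).hasFDerivAt
  have hcomp := hfderiv.comp_hasDerivAt z.2 hline
  exact hcomp.unique ((h.hasDerivWithinAt_time z.1 z.2 (Ioo_subset_Icc_self hz)).hasDerivAt
    (Icc_mem_nhds hz.1 hz.2))

theorem isGraphMCFAt (h : IsGraphMCF T u ut gu hu) (hz : z.2 ∈ Ioo 0 T) :
    IsGraphMCFAt spaceDir (0, 1) (fun y : (ι → ℝ) × ℝ => u y.1 y.2) z := by
  filter_upwards [continuous_snd.tendsto z (Ioo_mem_nhds hz.1 hz.2)] with y hy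
  simp only [graphHeat, graphTrace_eq_sum, h.fderiv_time hy, h.coordGrad_eq hy,
    h.fderiv_fderiv_spaceDir hy, h.flow y.1 y.2 (Ioo_subset_Icc_self hy), sub_self]

theorem continuousOn_grad (h : IsGraphMCF T u ut gu hu) (hT : 0 < T) :
    ContinuousOn (fun z : (ι → ℝ) × ℝ => gu z.1 z.2) (univ ×ˢ Icc 0 T) := by
  have hunique : UniqueDiffOn ℝ ((univ : Set (ι → ℝ)) ×ˢ Icc 0 T) :=
    uniqueDiffOn_univ.prod (uniqueDiffOn_Icc hT)
  refine continuousOn_pi.2 fun i => ((h.contDiffOn.continuousOn_fderivWithin hunique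
    (by norm_num)).clm_apply (continuousOn_const (c := spaceDir i))).congr fun z hz => ?_
  have hline : HasDerivAt (fun s : ℝ => z + s • spaceDir i) (spaceDir i) 0 := by
    simpa using ((hasDerivAt_id (0 : ℝ)).smul_const (spaceDir i)).const_add z
  exact (h.hasLineDerivAt_spaceDir hz.2 i).unique
    ((h.contDiffOn.differentiableOn three_ne_zero z hz).hasFDerivWithinAt.comp_hasDerivAt_of_eq 0
      hline (Eventually.of_forall fun s => by simpa [spaceDir] using hz) (by simp))

theorem periodic_grad (h : IsGraphMCF T u ut gu hu) {c : ι → ℝ} {t : ℝ} (ht : t ∈ Icc 0 T)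
    (hper : Periodic (fun x => u x t) c) : Periodic (fun x => gu x t) c := by
  intro x
  ext i
  refine (h.hasDerivAt_space (x + c) t ht i).unique ?_
  simpa only [add_right_comm x c, hper _] using h.hasDerivAt_space x t ht i

theorem exists_isCompact_forall_exists_eq (h : IsGraphMCF T u ut gu hu) {γ : ι → ι → ℝ}
    (hγ : LinearIndependent ℝ γ) (hper : ∀ k, ∀ t ∈ Icc 0 T, Periodic (fun x => u x t) (γ k)) :
    ∃ K : Set (ι → ℝ), IsCompact K ∧
      ∀ x, ∃ y ∈ K, ∀ t ∈ Icc 0 T, u x t = u y t ∧ gu x t = gu y t := by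
  classical
  obtain ⟨K, hK, hKf⟩ := exists_isCompact_forall_exists_eq_of_periodic
    (basisOfPiSpaceOfLinearIndependent hγ) (f := fun x (t : Icc 0 T) => (u x t, gu x t))
    fun k x => by
      ext t : 1
      rw [coe_basisOfPiSpaceOfLinearIndependent]
      exact Prod.ext (hper k t t.2 x) (h.periodic_grad t.2 (hper k t t.2) x)
  refine ⟨K, hK, fun x => ?_⟩
  obtain ⟨y, hy, hxy⟩ := hKf x
  exact ⟨y, hy, fun t ht => Prod.ext_iff.1 (congrFun hxy ⟨t, ht⟩)⟩

theorem continuousOn_gradFunSq (h : IsGraphMCF T u ut gu hu) (hT : 0 < T) :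
    ContinuousOn (fun z : (ι → ℝ) × ℝ => gradFunSq (gu z.1 z.2)) (univ ×ˢ Icc 0 T) := by
  have hgrad := continuousOn_pi.1 (h.continuousOn_grad hT)
  unfold gradFunSq
  fun_prop

theorem continuousOn_estimateDefect (h : IsGraphMCF T u ut gu hu) (hT : 0 < T) (b : ℝ) :
    ContinuousOn
      (fun z : (ι → ℝ) × ℝ => estimateDefect (gradFunSq (gu z.1 z.2)) z.2 (b - u z.1 z.2))
      (univ ×ˢ Ioc 0 T) := by
  have hslab : (univ : Set (ι → ℝ)) ×ˢ Ioc 0 T ⊆ univ ×ˢ Icc 0 T :=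
    prod_mono_right Ioc_subset_Icc_self
  exact ((((h.continuousOn_gradFunSq hT).mono hslab).log fun z _ => (gradFunSq_pos _).ne').sub
    (continuousOn_snd.log fun z hz => hz.2.1.ne')).sub
    (((continuousOn_const.sub (h.contDiffOn.continuousOn.mono hslab)).pow 2).div continuousOn_snd
      fun z hz => hz.2.1.ne')

theorem not_isMaxOn_estimateDefect (h : IsGraphMCF T u ut gu hu) {b m ε : ℝ} (hm : 0 < m)
    (hz : z.2 ∈ Ioo 0 T) (hzm : z.2 < min (m ^ 2) (m ^ 4 / 4)) (hbound : m ≤ b - u z.1 z.2)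
    (hε : ε ∈ Ioo 0 z.2) (hpos : 0 < estimateDefect (gradFunSq (gu z.1 z.2)) z.2 (b - u z.1 z.2)) :
    ¬IsMaxOn (fun z : (ι → ℝ) × ℝ => estimateDefect (gradFunSq (gu z.1 z.2)) z.2 (b - u z.1 z.2))
      (univ ×ˢ Icc ε z.2) z := by
  have hgrad {y : (ι → ℝ) × ℝ} (hy : y.2 ∈ Ioo 0 T) :
      gradFunSq (gu y.1 y.2) = graphGradFunSq spaceDir (fun y => u y.1 y.2) y := by
    rw [graphGradFunSq, h.coordGrad_eq hy]
  rw [hgrad hz] at hpos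
  refine fun hmax => (h.isGraphMCFAt hz).not_isMaxOn_estimateDefect (h.contDiffAt hz)
    (fun _ => rfl) hm hz.1 hzm hbound hε.2 hpos (isMaxOn_iff.2 fun y hy => ?_)
  simpa only [hgrad hz, hgrad ⟨hε.1.trans_le hy.2.1, hy.2.2.trans_lt hz.2⟩] using
    isMaxOn_iff.1 hmax y hy

theorem gradFunSq_le_mul_exp (h : IsGraphMCF T u ut gu hu) {γ : ι → ι → ℝ}
    (hγ : LinearIndependent ℝ γ) (hper : ∀ k, ∀ t ∈ Icc 0 T, Periodic (fun x => u x t) (γ k))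
    {b m : ℝ} (hm : 0 < m) (hbound : ∀ x, ∀ t ∈ Icc 0 T, m ≤ b - u x t) (x : ι → ℝ) {t : ℝ}
    (ht : t ∈ Ioc 0 (min T (min (m ^ 2) (m ^ 4 / 4)))) :
    gradFunSq (gu x t) ≤ t * Real.exp ((b - u x t) ^ 2 / t) := by
  have htT : t ≤ T := ht.2.trans (min_le_left _ _)
  have hT : 0 < T := ht.1.trans_le htT
  have hIoc : Ioc 0 t ⊆ Icc 0 T := fun s hs => ⟨hs.1.le, hs.2.trans htT⟩
  obtain ⟨K, hK, hKeq⟩ := h.exists_isCompact_forall_exists_eq hγ hper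
  obtain ⟨C, hC⟩ := (hK.prod isCompact_Icc).bddAbove_image
    ((h.continuousOn_gradFunSq hT).mono (prod_mono_left (subset_univ K)))
  have hWC (y : ι → ℝ) {s : ℝ} (hs : s ∈ Icc 0 T) : gradFunSq (gu y s) ≤ C := by
    obtain ⟨y', hy', heq⟩ := hKeq y
    exact (heq s hs).2 ▸ hC ⟨(y', s), ⟨hy', hs⟩, rfl⟩
  rw [← estimateDefect_nonpos_iff (gradFunSq_pos _) ht.1]
  refine nonpos_of_forall_not_isMaxOn (T := t) (t := t) hK
    (Q := fun z => estimateDefect (gradFunSq (gu z.1 z.2)) z.2 (b - u z.1 z.2))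
    ((h.continuousOn_estimateDefect hT b).mono (prod_mono_right (Ioc_subset_Ioc_right htT)))
    (fun y => ?_) ?_ (fun z hz hpos ε hε => ?_) x ⟨ht.1, le_rfl⟩
  · obtain ⟨y', hy', heq⟩ := hKeq y
    refine ⟨y', hy', fun s hs => ?_⟩
    simp only [heq s (hIoc hs)]
  · refine Eventually.frequently ?_
    filter_upwards [eventually_forall_estimateDefect_nonpos hm, Ioc_mem_nhdsGT ht.1] with ε h0 hε y
    exact h0 _ _ (gradFunSq_pos _) (hWC y (hIoc hε)) (hbound y ε (hIoc hε))
  · exact h.not_isMaxOn_estimateDefect hm ⟨hz.1, hz.2.trans_le htT⟩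
      (hz.2.trans_le (ht.2.trans (min_le_right _ _))) (hbound _ _ (hIoc ⟨hz.1, hz.2.le⟩)) hε hpos

end IsGraphMCF

theorem periodic_mcf_gradient_estimate_general {T : ℝ} {u ut : (ι → ℝ) → ℝ → ℝ}
    {gu : (ι → ℝ) → ℝ → ι → ℝ} {hu : (ι → ℝ) → ℝ → ι → ι → ℝ} (h : IsGraphMCF T u ut gu hu)
    {γ : ι → ι → ℝ} (hγ : LinearIndependent ℝ γ)
    (hper : ∀ k, ∀ t ∈ Icc 0 T, Periodic (fun x => u x t) (γ k)) {M : ℝ} (hM : 0 < M)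
    (hbound : ∀ x, ∀ t ∈ Icc 0 T, |u x t| ≤ M) (x : ι → ℝ) {t : ℝ}
    (ht : t ∈ Ioc 0 (min T (min (M ^ 2) (M ^ 4 / 4)))) :
    √(1 + ∑ i, gu x t i ^ 2) ≤ √t * Real.exp (2 * (|u x t| - 2 * M) ^ 2 / (4 * t)) := by
  have hsq : gradFunSq (gu x t) ≤ t * Real.exp ((2 * M - |u x t|) ^ 2 / t) := by
    rcases abs_cases (u x t) with ⟨habs, -⟩ | ⟨habs, -⟩
    · rw [habs]
      exact h.gradFunSq_le_mul_exp hγ hper hM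
        (fun y s hs => by linarith [(abs_le.1 (hbound y s hs)).2]) x ht
    · rw [habs]
      simpa [gradFunSq] using h.neg.gradFunSq_le_mul_exp (b := 2 * M) hγ
        (fun k s hs y => congrArg Neg.neg (hper k s hs y)) hM
        (fun y s hs => by simp only [Pi.neg_apply]; linarith [(abs_le.1 (hbound y s hs)).1]) x ht
  calc √(1 + ∑ i, gu x t i ^ 2)
    _ ≤ √(t * Real.exp ((2 * M - |u x t|) ^ 2 / t)) := Real.sqrt_le_sqrt hsq
    _ = √t * Real.exp (2 * (|u x t| - 2 * M) ^ 2 / (4 * t)) := by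
      rw [Real.sqrt_mul ht.1.le, ← Real.exp_half, sub_sq_comm]
      congr 2
      field [ht.1.ne']

end PeriodicFlow

/-- Height-dependent gradient estimate for periodic entire
graphs moving by mean curvature flow, independent of the initial gradient. -/
theorem periodic_mcf_gradient_estimate :
    ∀ M : ℝ, 0 < M →
    ∃ c T' : ℝ, 0 < c ∧ 0 < T' ∧
      ∀ (n : ℕ), 1 ≤ n → ∀ (T : ℝ), 0 < T →
      ∀ (u ut : (Fin n → ℝ) → ℝ → ℝ)
        (gu : (Fin n → ℝ) → ℝ → Fin n → ℝ)
        (hu : (Fin n → ℝ) → ℝ → Fin n → Fin n → ℝ),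
      ContDiffOn ℝ (⊤ : ℕ∞) (fun z : (Fin n → ℝ) × ℝ => u z.1 z.2)
        (Set.univ ×ˢ Set.Icc 0 T) →
      (∀ x : Fin n → ℝ, ∀ t ∈ Set.Icc (0:ℝ) T,
        HasDerivWithinAt (fun s => u x s) (ut x t) (Set.Icc 0 T) t) →
      (∀ x : Fin n → ℝ, ∀ t ∈ Set.Icc (0:ℝ) T, ∀ i,
        HasDerivAt (fun s : ℝ => u (x + s • (Pi.single i 1 : Fin n → ℝ)) t)
          (gu x t i) 0) →
      (∀ x : Fin n → ℝ, ∀ t ∈ Set.Icc (0:ℝ) T, ∀ i j,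
        HasDerivAt (fun s : ℝ => gu (x + s • (Pi.single i 1 : Fin n → ℝ)) t j)
          (hu x t i j) 0) →
      -- graphical mean curvature flow
      (∀ x : Fin n → ℝ, ∀ t ∈ Set.Icc (0:ℝ) T,
        ut x t = ∑ i, ∑ j,
          ((if i = j then (1:ℝ) else 0) -
            gu x t i * gu x t j / (1 + ∑ k, (gu x t k) ^ 2)) * hu x t i j) →
      -- periodicity with respect to a basis
      ∀ (γ : Fin n → Fin n → ℝ), LinearIndependent ℝ γ →
      (∀ k : Fin n, ∀ x : Fin n → ℝ, ∀ t : ℝ, u (x + γ k) t = u x t) →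
      -- height bound
      (∀ x : Fin n → ℝ, ∀ t ∈ Set.Icc (0:ℝ) T, |u x t| < M) →
      ∀ x : Fin n → ℝ, ∀ t ∈ Set.Ioc (0:ℝ) (min T T'),
        Real.sqrt (1 + ∑ i, (gu x t i) ^ 2) ≤
          Real.sqrt t * Real.exp (c * (|u x t| - 2 * M) ^ 2 / (4 * t)) := by
  intro M hM
  refine ⟨2, min (M ^ 2) (M ^ 4 / 4), two_pos, by positivity, ?_⟩
  intro n _ T _ u ut gu hu hsmooth htime hspace hgrad hflow γ hγ hper hbound x t ht
  exact periodic_mcf_gradient_estimate_general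
    ⟨contDiffOn_infty.1 hsmooth 3, htime, hspace, hgrad, hflow⟩ hγ
    (fun k t _ x => hper k x t) hM (fun x t ht => (hbound x t ht).le) x ht
end

section
/- Let n ≥ 1 and let F̄ : ℝ^{n+1} → ℝ be positively homogeneous of degree one, positive on nonzero vectors, twice continuously differentiable on ℝ^{n+1} ∖ {0}, and have strictly convex unit ball. Let φ⁰, φ¹, …, φⁿ be a basis of ℝ^{n+1}. Then there exist constants A, P > 0 such that for every p in the linear span of {φ¹,…,φⁿ} with F̄(p) ≥ P one has F̄(p − φ⁰) · D²F̄|_{p−φ⁰}(p, p) ≥ A. -/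
/-!
Put `r = p - v` with `v = φ⁰`. Since `F` is one-homogeneous, its Hessian annihilates the radial
direction, so `D²F|_r(p, p) = D²F|_r(v, v)`, and `F(r) · D²F|_r(v, v)` depends only on the ray
through `r`. As `p` ranges over a hyperplane missing `v`, with `F(p)` bounded below, these rays stay
in a closed cone that meets the line `ℝv` only at the origin. There strict convexity makes the
quantity positive, and compactness of the unit sphere makes it uniformly positive.
-/

/-- Positive homogeneity of real degree `k`: only the scaling by positive reals is prescribed, so
the definition covers gauges as well as their derivatives, which are singular at the origin. -/
def IsPosHomogeneous {E G : Type*} [SMul ℝ E] [SMul ℝ G] (k : ℝ) (f : E → G) : Prop :=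
  ∀ l : ℝ, 0 < l → ∀ x, f (l • x) = l ^ k • f x

namespace IsPosHomogeneous

section Algebra

variable {E : Type*} [SMul ℝ E] {j k : ℝ}

protected theorem mul {f g : E → ℝ} (hf : IsPosHomogeneous j f) (hg : IsPosHomogeneous k g) :
    IsPosHomogeneous (j + k) (fun x => f x * g x) := fun l hl x => by
  beta_reduce
  rw [hf l hl, hg l hl, smul_mul_smul_comm, ← Real.rpow_add hl]

protected theorem inv {f : E → ℝ} (hf : IsPosHomogeneous k f) :
    IsPosHomogeneous (-k) (fun x => (f x)⁻¹) := fun l hl x => by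
  beta_reduce
  rw [hf l hl, smul_eq_mul, mul_inv, Real.rpow_neg hl.le, smul_eq_mul]

protected theorem clm_apply {G H : Type*} [AddCommMonoid G] [Module ℝ G] [TopologicalSpace G]
    [AddCommMonoid H] [Module ℝ H] [TopologicalSpace H] [ContinuousConstSMul ℝ H]
    {f : E → G →L[ℝ] H} (hf : IsPosHomogeneous k f) (v : G) :
    IsPosHomogeneous k (fun x => f x v) := fun l hl x => by
  beta_reduce
  rw [hf l hl, smul_apply]

end Algebra

protected theorem map_zero {E G : Type*} [AddCommGroup E] [Module ℝ E] [AddCommGroup G] [Module ℝ G]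
    {k : ℝ} {f : E → G} (hf : IsPosHomogeneous k f) (hk : k ≠ 0) : f 0 = 0 := by
  have hfix : f 0 = (2 : ℝ) ^ k • f 0 := by simpa using hf 2 two_pos 0
  have hpow : (2 : ℝ) ^ k ≠ 1 := fun h =>
    hk ((Real.rpow_right_inj two_pos (by norm_num)).mp (h.trans (Real.rpow_zero 2).symm))
  by_contra h
  exact hpow (smul_left_injective ℝ h (by simpa using hfix.symm))

section Deriv

variable {E G : Type*} [NormedAddCommGroup E] [NormedSpace ℝ E] [NormedAddCommGroup G]
  [NormedSpace ℝ G] {k : ℝ} {f : E → G}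

protected theorem fderiv (hf : IsPosHomogeneous k f) :
    IsPosHomogeneous (k - 1) (fderiv ℝ f) := fun l hl x => by
  have hscaled : l • fderiv ℝ f (l • x) = l ^ k • fderiv ℝ f x := by
    rw [← fderiv_comp_smul, funext (hf l hl)]
    exact congrFun (fderiv_const_smul_field (l ^ k)) x
  rw [Real.rpow_sub_one hl.ne', div_eq_inv_mul, mul_smul, ← hscaled, inv_smul_smul₀ hl.ne']

theorem fderiv_apply_self (hf : IsPosHomogeneous k f) {x : E} (hd : DifferentiableAt ℝ f x) :
    fderiv ℝ f x x = k • f x := by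
  have hray : HasDerivAt (fun l : ℝ => f (l • x)) (fderiv ℝ f x x) 1 := by
    have hline : HasDerivAt (fun l : ℝ => l • x) x 1 := by
      simpa using (hasDerivAt_id (1 : ℝ)).smul_const x
    exact HasFDerivAt.comp_hasDerivAt 1 (by simpa using hd.hasFDerivAt) hline
  have hpow : HasDerivAt (fun l : ℝ => l ^ k • f x) (k • f x) 1 := by
    simpa using (Real.hasDerivAt_rpow_const (p := k) (.inl one_ne_zero)).smul_const (f x)
  refine hray.unique (hpow.congr_of_eventuallyEq ?_)
  filter_upwards [lt_mem_nhds one_pos] with l hl using hf l hl x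

theorem fderiv_fderiv_add_self (hf : IsPosHomogeneous 1 f) {x : E} (hC : ContDiffAt ℝ 2 f x)
    (v : E) : fderiv ℝ (fderiv ℝ f) x (x + v) (x + v) = fderiv ℝ (fderiv ℝ f) x v v := by
  have hd : DifferentiableAt ℝ (fderiv ℝ f) x :=
    (hC.fderiv_right (m := 1) (by norm_num)).differentiableAt one_ne_zero
  have hradial : fderiv ℝ (fderiv ℝ f) x x = 0 := by
    simpa using hf.fderiv.fderiv_apply_self hd
  have hsymm : IsSymmSndFDerivAt ℝ f x := hC.isSymmSndFDerivAt (by simp)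
  simp [hradial, hsymm.eq v x]

theorem mul_fderiv_fderiv {F : E → ℝ} (hF : IsPosHomogeneous k F) (v : E) :
    IsPosHomogeneous (2 * k - 2) (fun x => F x * fderiv ℝ (fderiv ℝ F) x v v) := by
  have hD2 : IsPosHomogeneous (k - 1 - 1) (fun x => fderiv ℝ (fderiv ℝ F) x v) :=
    hF.fderiv.fderiv.clm_apply v
  convert hF.mul (hD2.clm_apply v) using 1
  ring

end Deriv

section Compactness

variable {E : Type*} [NormedAddCommGroup E] [NormedSpace ℝ E] [ProperSpace E] {k : ℝ}

theorem exists_pos_mul_norm_rpow_le {g : E → ℝ} (hg : IsPosHomogeneous k g) {S : Set E}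
    (hS : IsClosed S) (hcone : ∀ l : ℝ, 0 < l → ∀ x ∈ S, l • x ∈ S)
    (hc : ContinuousOn g (S \ {0})) (hpos : ∀ x ∈ S \ {0}, 0 < g x) :
    ∃ A : ℝ, 0 < A ∧ ∀ x ∈ S \ {0}, A * ‖x‖ ^ k ≤ g x := by
  have hsub : Metric.sphere 0 1 ∩ S ⊆ S \ {0} := fun x hx =>
    ⟨hx.2, ne_zero_of_mem_unit_sphere ⟨x, hx.1⟩⟩
  obtain ⟨A, hA, hle⟩ := ((isCompact_sphere (0 : E) 1).inter_right hS).exists_forall_le'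
    (hc.mono hsub) fun x hx => hpos x (hsub hx)
  refine ⟨A, hA, fun x ⟨hxS, hx⟩ => ?_⟩
  have hnorm : 0 < ‖x‖ := norm_pos_iff.mpr hx
  have hunit : ‖x‖⁻¹ • x ∈ Metric.sphere 0 1 ∩ S :=
    ⟨by simp [norm_smul, hnorm.ne'], hcone _ (inv_pos.mpr hnorm) x hxS⟩
  calc A * ‖x‖ ^ k ≤ g (‖x‖⁻¹ • x) * ‖x‖ ^ k := by gcongr; exact hle _ hunit
    _ = g x := by
      rw [mul_comm, ← smul_eq_mul, ← hg _ hnorm, smul_inv_smul₀ hnorm.ne']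

theorem exists_pos_mul_le_norm_rpow {f : E → ℝ} (hf : IsPosHomogeneous k f)
    (hc : ContinuousOn f {0}ᶜ) (hpos : ∀ x, x ≠ 0 → 0 < f x) :
    ∃ c : ℝ, 0 < c ∧ ∀ x, x ≠ 0 → c * f x ≤ ‖x‖ ^ k := by
  rw [Set.compl_eq_univ_sdiff] at hc
  obtain ⟨c, hc_pos, hle⟩ := hf.inv.exists_pos_mul_norm_rpow_le isClosed_univ (by simp)
    (hc.inv₀ fun x hx => (hpos x hx.2).ne') fun x hx => inv_pos.mpr (hpos x hx.2)
  refine ⟨c, hc_pos, fun x hx => ?_⟩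
  have hbound := hle x ⟨Set.mem_univ x, hx⟩
  rwa [Real.rpow_neg (norm_nonneg x), ← div_eq_mul_inv, ← one_div (f x),
    div_le_div_iff₀ (Real.rpow_pos_of_pos (norm_pos_iff.mpr hx) k) (hpos x hx), one_mul] at hbound

end Compactness

end IsPosHomogeneous

section TransverseCone

variable {E : Type*} [NormedAddCommGroup E] [NormedSpace ℝ E]

/-- When `f v = 1`, the vectors whose component in `ker f` along the splitting `ker f ⊕ ℝv`
dominates `δ` times their `v`-coordinate. For `δ > 0` this is a double cone around `ker f` that
avoids the punctured line through `v`. -/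
def transverseCone (f : E →L[ℝ] ℝ) (v : E) (δ : ℝ) : Set E :=
  {x | δ * |f x| ≤ ‖x - f x • v‖}

variable {f : E →L[ℝ] ℝ} {v : E} {δ : ℝ}

theorem isClosed_transverseCone : IsClosed (transverseCone f v δ) :=
  isClosed_le (by fun_prop) (by fun_prop)

theorem smul_mem_transverseCone {l : ℝ} (hl : 0 < l) {x : E} (hx : x ∈ transverseCone f v δ) :
    l • x ∈ transverseCone f v δ := by
  have hscaled := mul_le_mul_of_nonneg_left hx hl.le
  simpa [transverseCone, mul_smul, ← smul_sub, norm_smul, abs_mul, abs_of_pos hl,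
    mul_left_comm] using hscaled

theorem ne_smul_of_mem_transverseCone (hfv : f v = 1) (hδ : 0 < δ) {x : E}
    (hx : x ∈ transverseCone f v δ) (c : ℝ) : v ≠ c • x := by
  rintro rfl
  have hfx : f x * c = 1 := by simpa [mul_comm] using hfv
  have hle : δ * |f x| ≤ 0 := by simpa [transverseCone, smul_smul, hfx] using hx
  have hfx0 : f x ≠ 0 := left_ne_zero_of_mul_eq_one hfx
  exact hle.not_gt (by positivity)

theorem sub_mem_transverseCone (hfv : f v = 1) {p : E} (hfp : f p = 0) (hp : δ ≤ ‖p‖) :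
    p - v ∈ transverseCone f v δ := by
  simpa [transverseCone, hfv, hfp] using hp

end TransverseCone

section Anisotropy

variable {E : Type*} [NormedAddCommGroup E] [NormedSpace ℝ E] [FiniteDimensional ℝ E] {F : E → ℝ}

theorem exists_pos_le_mul_fderiv_fderiv_of_isClosed_cone (hF : IsPosHomogeneous 1 F)
    (hpos : ∀ x, x ≠ 0 → 0 < F x) (hC : ContDiffOn ℝ 2 F {0}ᶜ) {v : E} {S : Set E}
    (hS : IsClosed S) (hcone : ∀ l : ℝ, 0 < l → ∀ x ∈ S, l • x ∈ S)
    (hhess : ∀ x ∈ S \ {0}, 0 < fderiv ℝ (fderiv ℝ F) x v v) :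
    ∃ A : ℝ, 0 < A ∧ ∀ x ∈ S \ {0}, A ≤ F x * fderiv ℝ (fderiv ℝ F) x v v := by
  have hopen : IsOpen ({0}ᶜ : Set E) := isOpen_compl_singleton
  have hcont : ContinuousOn (fderiv ℝ (fderiv ℝ F)) {0}ᶜ :=
    (hC.fderiv_of_isOpen (m := 1) hopen (by norm_num)).continuousOn_fderiv_of_isOpen hopen le_rfl
  have hcontG : ContinuousOn (fun x => F x * fderiv ℝ (fderiv ℝ F) x v v) {0}ᶜ :=
    hC.continuousOn.mul ((hcont.clm_apply continuousOn_const).clm_apply continuousOn_const)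
  simpa using (hF.mul_fderiv_fderiv v).exists_pos_mul_norm_rpow_le hS hcone
    (hcontG.mono fun x hx => hx.2) fun x hx => mul_pos (hpos x hx.2) (hhess x hx)

theorem anisotropic_degeneracy_control_general (hF : IsPosHomogeneous 1 F)
    (hpos : ∀ x, x ≠ 0 → 0 < F x) (hC : ContDiffOn ℝ 2 F {0}ᶜ)
    (hconv : ∀ x, x ≠ 0 → ∀ r, (∀ c : ℝ, r ≠ c • x) → 0 < fderiv ℝ (fderiv ℝ F) x r r)
    (W : Submodule ℝ E) {v : E} (hv : v ∉ W) {P : ℝ} (hP : 0 < P) :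
    ∃ A : ℝ, 0 < A ∧ ∀ p ∈ W, P ≤ F p →
      A ≤ F (p - v) * fderiv ℝ (fderiv ℝ F) (p - v) p p := by
  obtain ⟨f, hfv, hfW⟩ : ∃ f : E →L[ℝ] ℝ, f v = 1 ∧ ∀ p ∈ W, f p = 0 := by
    obtain ⟨g, hgW, hgv⟩ := LinearMap.exists_extend_of_notMem (0 : W →ₗ[ℝ] ℝ) hv 1
    exact ⟨g.toContinuousLinearMap, hgv, fun p hp => LinearMap.congr_fun hgW ⟨p, hp⟩⟩
  obtain ⟨c, hc, hFnorm⟩ := hF.exists_pos_mul_le_norm_rpow hC.continuousOn hpos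
  obtain ⟨A, hA, hbound⟩ := exists_pos_le_mul_fderiv_fderiv_of_isClosed_cone hF hpos hC
    (isClosed_transverseCone (f := f) (δ := c * P)) (fun l hl x => smul_mem_transverseCone hl)
    fun x hx => hconv x hx.2 v (ne_smul_of_mem_transverseCone hfv (mul_pos hc hP) hx.1)
  refine ⟨A, hA, fun p hp hPp => ?_⟩
  have hp0 : p ≠ 0 := by
    rintro rfl
    exact (hP.trans_le hPp).ne' (hF.map_zero one_ne_zero)
  have hnorm : c * P ≤ ‖p‖ := by
    simpa using (mul_le_mul_of_nonneg_left hPp hc.le).trans (hFnorm p hp0)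
  have hpv : p - v ≠ 0 := fun h => hv (sub_eq_zero.mp h ▸ hp)
  have hvp := hF.fderiv_fderiv_add_self (hC.contDiffAt (isOpen_compl_singleton.mem_nhds hpv)) v
  rw [sub_add_cancel] at hvp
  rw [hvp]
  exact hbound _ ⟨sub_mem_transverseCone hfv (hfW p hp) hnorm, hpv⟩

end Anisotropy

/-- Degeneracy control for anisotropic mean curvature flow:
for a positive, one-homogeneous `F̄` with strictly convex unit ball there are
`A, P > 0` with `F̄(p−φ⁰) · D²F̄|_{p−φ⁰}(p,p) ≥ A` whenever `p` lies in the span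
of `φ¹,…,φⁿ` and `F̄(p) ≥ P`. -/
theorem anisotropic_degeneracy_control
    (n : ℕ) (hn : 1 ≤ n)
    (F : (Fin (n + 1) → ℝ) → ℝ)
    (hF_hom : ∀ l : ℝ, 0 < l → ∀ ω : Fin (n + 1) → ℝ, F (l • ω) = l * F ω)
    (hF_pos : ∀ ω : Fin (n + 1) → ℝ, ω ≠ 0 → 0 < F ω)
    (hF_C2 : ContDiffOn ℝ 2 F {(0 : Fin (n + 1) → ℝ)}ᶜ)
    (hF_conv : ∀ ω : Fin (n + 1) → ℝ, ω ≠ 0 → ∀ r : Fin (n + 1) → ℝ,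
      (∀ cc : ℝ, r ≠ cc • ω) → 0 < fderiv ℝ (fderiv ℝ F) ω r r)
    (φ : Fin (n + 1) → (Fin (n + 1) → ℝ))
    (hφ_li : LinearIndependent ℝ φ)
    (hφ_span : Submodule.span ℝ (Set.range φ) = ⊤) :
    ∃ A P : ℝ, 0 < A ∧ 0 < P ∧
      ∀ p : Fin (n + 1) → ℝ,
        p ∈ Submodule.span ℝ (φ '' {i | i ≠ 0}) →
        P ≤ F p →
        A ≤ F (p - φ 0) * fderiv ℝ (fderiv ℝ F) (p - φ 0) p p := by
  have hφ0 : φ 0 ∉ Submodule.span ℝ (φ '' {i | i ≠ 0}) := hφ_li.notMem_span_image (by simp)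
  obtain ⟨A, hA, hbound⟩ := anisotropic_degeneracy_control_general
    (by simpa [IsPosHomogeneous] using hF_hom) hF_pos hF_C2 hF_conv _ hφ0 one_pos
  exact ⟨A, 1, hA, one_pos, hbound⟩
end

section
/- Let n ≥ 1, let e₀, e₁, …, eₙ be the standard basis of ℝ^{n+1}, and let H = {x ∈ ℝ^{n+1} : x₀ = 0} be the coordinate hyperplane spanned by e₁,…,eₙ. Let F̄ : ℝ^{n+1} → ℝ be positively homogeneous of degree one, positive on nonzero vectors, twice continuously differentiable on ℝ^{n+1} ∖ {0}, and have strictly convex unit ball. Then there exist constants A₀, P > 0 such that for all p, v ∈ H with F̄(p) ≥ P one has |p|⁴ · F̄(p − e₀) · D²F̄|_{p−e₀}(v, v) ≥ A₀ · ⟨v, p⟩², where |·| and ⟨·,·⟩ are the Euclidean norm and inner product on ℝ^{n+1}. -/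
/-!
The form `F(ω) · D²F(ω)` depends only on the ray of `ω`, vanishes in the direction of `ω`, and is
positive in all other directions. By compactness it therefore dominates the squared distance from
`v` to the line `ℝω`. Let `ω = p - e` with `p`, `v` in a hyperplane missing `e` and `p` bounded
away from zero. The component of `v - c ω` transverse to the hyperplane has size `|c|`, and unless
`|c|` is at least of order `|v| / |p|` the vector `c ω` is too short to cancel most of `v`; hence
the distance is at least of order `|v| / |p|`. Cauchy-Schwarz then gives the asserted bound on
`⟨v, p⟩²`.
-/

section Homogeneous

variable {E : Type*} [NormedAddCommGroup E] [NormedSpace ℝ E] {F : E → ℝ}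

theorem fderiv_smul_of_homogeneous (hF : ∀ l : ℝ, 0 < l → ∀ x, F (l • x) = l * F x)
    {l : ℝ} (hl : 0 < l) (x : E) : fderiv ℝ F (l • x) = fderiv ℝ F x := by
  have h_chain := fderiv_comp_smul (𝕜 := ℝ) (f := F) (x := x) l
  have h_hom : (fun y => F (l • y)) = l • F := funext (hF l hl)
  rw [h_hom, fderiv_const_smul_field] at h_chain
  exact (smul_right_injective _ hl.ne' h_chain).symm

theorem smul_fderiv_fderiv_smul_of_homogeneous
    (hF : ∀ l : ℝ, 0 < l → ∀ x, F (l • x) = l * F x) {l : ℝ} (hl : 0 < l) (x : E) :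
    l • fderiv ℝ (fderiv ℝ F) (l • x) = fderiv ℝ (fderiv ℝ F) x := by
  rw [← fderiv_comp_smul, funext (fderiv_smul_of_homogeneous hF hl)]

theorem fderiv_fderiv_apply_self_of_homogeneous
    (hF : ∀ l : ℝ, 0 < l → ∀ x, F (l • x) = l * F x) {x : E}
    (hd : DifferentiableAt ℝ (fderiv ℝ F) x) : fderiv ℝ (fderiv ℝ F) x x = 0 := by
  have h_ray : HasDerivAt (fun t : ℝ => t • x) x 1 := by
    simpa only [id, one_smul] using (hasDerivAt_id (1 : ℝ)).smul_const x
  have h_deriv : HasDerivAt (fun t : ℝ => fderiv ℝ F (t • x)) (fderiv ℝ (fderiv ℝ F) x x) 1 :=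
    HasFDerivAt.comp_hasDerivAt (1 : ℝ) (by simpa only [one_smul] using hd.hasFDerivAt) h_ray
  have h_const : (fun t : ℝ => fderiv ℝ F (t • x)) =ᶠ[nhds 1] fun _ => fderiv ℝ F x := by
    filter_upwards [lt_mem_nhds (zero_lt_one' ℝ)] with t ht
    exact fderiv_smul_of_homogeneous hF ht x
  exact h_deriv.unique ((hasDerivAt_const (1 : ℝ) (fderiv ℝ F x)).congr_of_eventuallyEq h_const)

theorem exists_pos_forall_le_mul_norm_of_homogeneous [FiniteDimensional ℝ E]
    (hF : ∀ l : ℝ, 0 < l → ∀ x, F (l • x) = l * F x)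
    (hc : ContinuousOn F (Metric.sphere 0 1)) : ∃ C : ℝ, 0 < C ∧ ∀ x, F x ≤ C * ‖x‖ := by
  obtain ⟨C, hC⟩ := (isCompact_sphere (0 : E) 1).bddAbove_image hc
  refine ⟨max C 1, by positivity, fun x => ?_⟩
  obtain rfl | hx := eq_or_ne x 0
  · have h_two := hF 2 two_pos 0
    rw [smul_zero] at h_two
    rw [norm_zero, mul_zero]
    linarith
  · have hx_pos : 0 < ‖x‖ := norm_pos_iff.2 hx
    have h_unit : F (‖x‖⁻¹ • x) ≤ C :=
      hC (Set.mem_image_of_mem F (mem_sphere_zero_iff_norm.2 (norm_smul_inv_norm hx)))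
    rw [hF _ (inv_pos.2 hx_pos), inv_mul_le_iff₀' hx_pos] at h_unit
    exact h_unit.trans (by gcongr; exact le_max_left C 1)

end Homogeneous

section AngularMetric

variable {E : Type*} [NormedAddCommGroup E] [NormedSpace ℝ E] {F : E → ℝ}

/-- The angular metric `F · D²F` of Finsler geometry. For a Minkowski norm `F` it is a positive
semidefinite form, constant along rays, whose kernel at `ω` is the line through `ω`. -/
noncomputable def angularMetric (F : E → ℝ) (ω : E) : E →L[ℝ] E →L[ℝ] ℝ :=
  F ω • fderiv ℝ (fderiv ℝ F) ω

theorem angularMetric_apply (F : E → ℝ) (ω v w : E) :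
    angularMetric F ω v w = F ω * fderiv ℝ (fderiv ℝ F) ω v w := rfl

theorem angularMetric_smul (hF : ∀ l : ℝ, 0 < l → ∀ x, F (l • x) = l * F x)
    {l : ℝ} (hl : 0 < l) (ω : E) : angularMetric F (l • ω) = angularMetric F ω := by
  rw [angularMetric, hF l hl, mul_comm, mul_smul, smul_fderiv_fderiv_smul_of_homogeneous hF hl,
    angularMetric]

theorem angularMetric_add_smul_self (hF : ∀ l : ℝ, 0 < l → ∀ x, F (l • x) = l * F x) {ω : E}
    (hd : ContDiffAt ℝ 2 F ω) (c : ℝ) (v : E) :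
    angularMetric F ω (v + c • ω) (v + c • ω) = angularMetric F ω v v := by
  have h_left : fderiv ℝ (fderiv ℝ F) ω ω = 0 :=
    fderiv_fderiv_apply_self_of_homogeneous hF
      ((hd.fderiv_right (m := 1) (by norm_num)).differentiableAt one_ne_zero)
  have h_right (u : E) : fderiv ℝ (fderiv ℝ F) ω u ω = 0 := by
    rw [(hd.isSymmSndFDerivAt (by simp)).eq u ω, h_left, zero_apply]
  simp only [angularMetric_apply, map_add, map_smul, add_apply, smul_apply, h_left, h_right,
    smul_eq_mul, mul_zero, add_zero, zero_apply]

theorem continuousOn_angularMetric {s : Set E} (hF : ContDiffOn ℝ 2 F s)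
    (hs : IsOpen s) : ContinuousOn (angularMetric F) s :=
  hF.continuousOn.smul <|
    (hF.fderiv_of_isOpen (m := 1) hs (by norm_num)).continuousOn_fderiv_of_isOpen hs le_rfl

end AngularMetric

section BirkhoffOrthogonal

variable {E : Type*} [NormedAddCommGroup E] [NormedSpace ℝ E] {v ω : E}

/-- Birkhoff-James orthogonality of `v` to `ω`: the origin is a point of the line `ℝω` nearest
to `v`. It replaces Euclidean orthogonality in a general normed space; it is not symmetric. -/
def BirkhoffOrthogonal (v ω : E) : Prop :=
  ∀ c : ℝ, ‖v‖ ≤ ‖v + c • ω‖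

protected theorem BirkhoffOrthogonal.smul (h : BirkhoffOrthogonal v ω) {a : ℝ} (ha : a ≠ 0)
    (b : ℝ) : BirkhoffOrthogonal (a • v) (b • ω) := fun c => by
  have h_factor : a • v + c • b • ω = a • (v + (a⁻¹ * (c * b)) • ω) := by
    rw [smul_add, smul_smul, smul_smul, mul_inv_cancel_left₀ ha]
  rw [h_factor, norm_smul, norm_smul]
  gcongr
  exact h _

theorem BirkhoffOrthogonal.ne_smul (h : BirkhoffOrthogonal v ω) (hv : v ≠ 0) (c : ℝ) :
    v ≠ c • ω := by
  rintro rfl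
  simpa only [neg_smul, add_neg_cancel, norm_zero, norm_le_zero_iff, hv] using h (-c)

theorem isClosed_setOf_birkhoffOrthogonal :
    IsClosed {x : E × E | BirkhoffOrthogonal x.2 x.1} := by
  simp only [BirkhoffOrthogonal, Set.ofPred_forall]
  exact isClosed_iInter fun c => isClosed_le (by fun_prop) (by fun_prop)

theorem exists_birkhoffOrthogonal_add_smul [FiniteDimensional ℝ E] (v ω : E) :
    ∃ c : ℝ, BirkhoffOrthogonal (v + c • ω) ω := by
  obtain ⟨y, hy, h_dist⟩ :=
    (Submodule.span ℝ {ω}).closed_of_finiteDimensional.exists_infDist_eq_dist ⟨0, zero_mem _⟩ v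
  obtain ⟨c, rfl⟩ := Submodule.mem_span_singleton.1 hy
  refine ⟨-c, fun b => ?_⟩
  calc ‖v + -c • ω‖ = Metric.infDist v (Submodule.span ℝ {ω}) := by
        rw [h_dist, dist_eq_norm, neg_smul, sub_eq_add_neg]
    _ ≤ dist v ((c - b) • ω) :=
        Metric.infDist_le_dist_of_mem (Submodule.smul_mem _ _ (Submodule.mem_span_singleton_self ω))
    _ = ‖v + -c • ω + b • ω‖ := by
        rw [dist_eq_norm]
        congr 1
        module

end BirkhoffOrthogonal

section MinkowskiNorm

variable {E : Type*} [NormedAddCommGroup E] [NormedSpace ℝ E] {F : E → ℝ}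

/-- A Minkowski norm of class `C²`: a possibly asymmetric norm whose unit ball is strictly convex
in the sense that its second derivative is positive in all nonradial directions. -/
structure IsMinkowskiNorm (F : E → ℝ) : Prop where
  map_smul_of_pos : ∀ l : ℝ, 0 < l → ∀ ω, F (l • ω) = l * F ω
  pos_of_ne_zero : ∀ ω, ω ≠ 0 → 0 < F ω
  contDiffOn : ContDiffOn ℝ 2 F {0}ᶜ
  fderiv_fderiv_pos : ∀ ω, ω ≠ 0 → ∀ r, (∀ c : ℝ, r ≠ c • ω) → 0 < fderiv ℝ (fderiv ℝ F) ω r r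

namespace IsMinkowskiNorm

theorem angularMetric_pos (hF : IsMinkowskiNorm F) {ω v : E} (hω : ω ≠ 0)
    (hv : ∀ c : ℝ, v ≠ c • ω) : 0 < angularMetric F ω v v :=
  mul_pos (hF.pos_of_ne_zero ω hω) (hF.fderiv_fderiv_pos ω hω v hv)

theorem exists_pos_le_angularMetric_of_norm_eq_one [FiniteDimensional ℝ E]
    (hF : IsMinkowskiNorm F) :
    ∃ m : ℝ, 0 < m ∧ ∀ ω v : E, ‖ω‖ = 1 → ‖v‖ = 1 → BirkhoffOrthogonal v ω →
      m ≤ angularMetric F ω v v := by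
  let K : Set (E × E) :=
    (Metric.sphere 0 1 ×ˢ Metric.sphere 0 1) ∩ {x | BirkhoffOrthogonal x.2 x.1}
  have hK : IsCompact K :=
    ((isCompact_sphere 0 1).prod (isCompact_sphere 0 1)).inter_right
      isClosed_setOf_birkhoffOrthogonal
  have h_fst : Set.MapsTo Prod.fst K {(0 : E)}ᶜ := fun x hx =>
    ne_zero_of_mem_unit_sphere ⟨x.1, hx.1.1⟩
  have h_cont : ContinuousOn (fun x : E × E => angularMetric F x.1 x.2 x.2) K :=
    (((continuousOn_angularMetric hF.contDiffOn isOpen_compl_singleton).comp continuousOn_fst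
      h_fst).clm_apply continuousOn_snd).clm_apply continuousOn_snd
  have h_pos : ∀ x ∈ K, 0 < angularMetric F x.1 x.2 x.2 := fun x hx =>
    hF.angularMetric_pos (h_fst hx) (hx.2.ne_smul (ne_zero_of_mem_unit_sphere ⟨x.2, hx.1.2⟩))
  obtain ⟨m, hm, h_min⟩ := hK.exists_forall_le' h_cont h_pos
  exact ⟨m, hm, fun ω v hω hv h_orth => h_min (ω, v)
    ⟨⟨mem_sphere_zero_iff_norm.2 hω, mem_sphere_zero_iff_norm.2 hv⟩, h_orth⟩⟩

theorem exists_mul_norm_sq_le_angularMetric [FiniteDimensional ℝ E] (hF : IsMinkowskiNorm F) :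
    ∃ m : ℝ, 0 < m ∧ ∀ ω v : E, ω ≠ 0 → BirkhoffOrthogonal v ω →
      m * ‖v‖ ^ 2 ≤ angularMetric F ω v v := by
  obtain ⟨m, hm, h_unit⟩ := hF.exists_pos_le_angularMetric_of_norm_eq_one
  refine ⟨m, hm, fun ω v hω h_orth => ?_⟩
  obtain rfl | hv := eq_or_ne v 0
  · simp
  have hv_pos : 0 < ‖v‖ := norm_pos_iff.2 hv
  have h_scaled := h_unit (‖ω‖⁻¹ • ω) (‖v‖⁻¹ • v) (norm_smul_inv_norm hω) (norm_smul_inv_norm hv)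
    (h_orth.smul (inv_ne_zero hv_pos.ne') _)
  rw [angularMetric_smul hF.map_smul_of_pos (inv_pos.2 (norm_pos_iff.2 hω)), map_smul, map_smul,
    smul_apply, smul_eq_mul, smul_eq_mul, le_inv_mul_iff₀ hv_pos, le_inv_mul_iff₀ hv_pos]
    at h_scaled
  linarith

end IsMinkowskiNorm

end MinkowskiNorm

section Hyperplane

theorem exists_mul_abs_le_norm_add_smul {E : Type*} [NormedAddCommGroup E] [NormedSpace ℝ E]
    {H : Submodule ℝ E} (hH : IsClosed (H : Set E)) {e : E} (he : e ∉ H) :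
    ∃ δ : ℝ, 0 < δ ∧ ∀ u ∈ H, ∀ c : ℝ, δ * |c| ≤ ‖u + c • e‖ := by
  refine ⟨‖H.mkQ e‖, ?_, fun u hu c => ?_⟩
  · rwa [norm_pos_iff, Submodule.mkQ_apply, ne_eq, Submodule.Quotient.mk_eq_zero]
  · have hu_zero : H.mkQ u = 0 := (Submodule.Quotient.mk_eq_zero H).2 hu
    calc ‖H.mkQ e‖ * |c| = ‖H.mkQ (u + c • e)‖ := by
          rw [map_add, map_smul, hu_zero, zero_add, norm_smul, Real.norm_eq_abs, mul_comm]
      _ ≤ ‖u + c • e‖ := Submodule.Quotient.norm_mk_le H _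

theorem exists_norm_le_mul_norm_add_smul_sub {E : Type*} [NormedAddCommGroup E] [NormedSpace ℝ E]
    {H : Submodule ℝ E} (hH : IsClosed (H : Set E)) {e : E} (he : e ∉ H) {r : ℝ} (hr : 0 < r) :
    ∃ K : ℝ, 0 < K ∧ ∀ p ∈ H, ∀ v ∈ H, r ≤ ‖p‖ → ∀ c : ℝ,
      ‖v‖ ≤ K * ‖p‖ * ‖v + c • (p - e)‖ := by
  obtain ⟨δ, hδ, h_transverse⟩ := exists_mul_abs_le_norm_add_smul hH he
  refine ⟨r⁻¹ + δ⁻¹ * (1 + r⁻¹ * ‖e‖), by positivity, fun p hp v hv h_far c => ?_⟩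
  set w := v + c • (p - e) with hw
  have h_coeff : |c| ≤ δ⁻¹ * ‖w‖ := by
    have h_split : v + c • p + (-c) • e = w := by
      rw [hw]
      module
    have h_le := h_transverse (v + c • p) (H.add_mem hv (H.smul_mem c hp)) (-c)
    rwa [h_split, abs_neg, ← le_inv_mul_iff₀ hδ] at h_le
  have h_one : 1 ≤ r⁻¹ * ‖p‖ := (one_le_inv_mul₀ hr).2 h_far
  calc ‖v‖ = ‖w - c • (p - e)‖ := by rw [hw, add_sub_cancel_right]
    _ ≤ ‖w‖ + |c| * (‖p‖ + ‖e‖) := by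
        grw [norm_sub_le, norm_smul, Real.norm_eq_abs, norm_sub_le p e]
    _ ≤ ‖w‖ + δ⁻¹ * ‖w‖ * (‖p‖ + ‖e‖) := by gcongr
    _ = (1 + δ⁻¹ * (‖p‖ + 1 * ‖e‖)) * ‖w‖ := by ring
    _ ≤ (r⁻¹ * ‖p‖ + δ⁻¹ * (‖p‖ + r⁻¹ * ‖p‖ * ‖e‖)) * ‖w‖ := by gcongr
    _ = (r⁻¹ + δ⁻¹ * (1 + r⁻¹ * ‖e‖)) * ‖p‖ * ‖w‖ := by ring

theorem anisotropic_coercivity_hyperplane_general {E : Type*} [NormedAddCommGroup E]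
    [NormedSpace ℝ E] [FiniteDimensional ℝ E] {F : E → ℝ} (hF : IsMinkowskiNorm F)
    {H : Submodule ℝ E} {e : E} (he : e ∉ H) {P : ℝ} (hP : 0 < P) :
    ∃ A : ℝ, 0 < A ∧ ∀ p ∈ H, ∀ v ∈ H, P ≤ F p →
      A * ‖v‖ ^ 2 ≤ ‖p‖ ^ 2 * angularMetric F (p - e) v v := by
  have h_sphere : Metric.sphere (0 : E) 1 ⊆ {0}ᶜ := fun x hx =>
    ne_zero_of_mem_unit_sphere ⟨x, hx⟩
  obtain ⟨C, hC, h_bound⟩ := exists_pos_forall_le_mul_norm_of_homogeneous hF.map_smul_of_pos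
    (hF.contDiffOn.continuousOn.mono h_sphere)
  obtain ⟨K, hK, h_dist⟩ := exists_norm_le_mul_norm_add_smul_sub H.closed_of_finiteDimensional he
    (div_pos hP hC)
  obtain ⟨m, hm, h_angular⟩ := hF.exists_mul_norm_sq_le_angularMetric
  refine ⟨m / K ^ 2, by positivity, fun p hp v hv hPp => ?_⟩
  have hω : p - e ≠ 0 := fun h => he (sub_eq_zero.1 h ▸ hp)
  have h_smooth : ContDiffAt ℝ 2 F (p - e) :=
    hF.contDiffOn.contDiffAt (isOpen_compl_singleton.mem_nhds hω)
  have h_far : P / C ≤ ‖p‖ := (div_le_iff₀' hC).2 (hPp.trans (h_bound p))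
  obtain ⟨c, h_orth⟩ := exists_birkhoffOrthogonal_add_smul v (p - e)
  set w := v + c • (p - e) with hw
  calc m / K ^ 2 * ‖v‖ ^ 2 ≤ m / K ^ 2 * (K * ‖p‖ * ‖w‖) ^ 2 := by
        gcongr
        exact h_dist p hp v hv h_far c
    _ = ‖p‖ ^ 2 * (m * ‖w‖ ^ 2) := by field_simp
    _ ≤ ‖p‖ ^ 2 * angularMetric F (p - e) w w := by
        gcongr
        exact h_angular _ _ hω h_orth
    _ = ‖p‖ ^ 2 * angularMetric F (p - e) v v := by
        rw [hw, angularMetric_add_smul_self hF.map_smul_of_pos h_smooth]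

end Hyperplane

section Euclidean

variable {ι : Type*} [Fintype ι]

theorem norm_sq_le_sum_sq (x : ι → ℝ) : ‖x‖ ^ 2 ≤ ∑ i, x i ^ 2 := by
  have h_sqrt : ‖x‖ ≤ √(∑ i, x i ^ 2) :=
    (pi_norm_le_iff_of_nonneg (Real.sqrt_nonneg _)).2 fun i => Real.abs_le_sqrt <|
      Finset.single_le_sum (f := fun i => x i ^ 2) (fun i _ => sq_nonneg (x i))
        (Finset.mem_univ i)
  exact (Real.le_sqrt (norm_nonneg x) (by positivity)).1 h_sqrt

theorem sum_sq_le_card_mul_norm_sq (x : ι → ℝ) : ∑ i, x i ^ 2 ≤ Fintype.card ι * ‖x‖ ^ 2 := by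
  rw [← nsmul_eq_mul]
  refine Finset.sum_le_card_nsmul _ _ _ fun i _ => sq_le_sq.2 ?_
  rw [abs_norm]
  exact norm_le_pi_norm x i

theorem div_card_mul_sum_mul_sq_le {A h : ℝ} {p v : ι → ℝ} (hA : 0 ≤ A)
    (h_le : A * ‖v‖ ^ 2 ≤ ‖p‖ ^ 2 * h) :
    A / Fintype.card ι * (∑ i, v i * p i) ^ 2 ≤ (∑ i, p i ^ 2) ^ 2 * h := by
  obtain rfl | hp := eq_or_ne p 0
  · simp
  have h_nonneg : 0 ≤ h :=
    nonneg_of_mul_nonneg_right ((by positivity : 0 ≤ A * ‖v‖ ^ 2).trans h_le) (by positivity)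
  have : Nonempty ι := (Function.ne_iff.1 hp).nonempty
  calc A / Fintype.card ι * (∑ i, v i * p i) ^ 2
      ≤ A / Fintype.card ι * (Fintype.card ι * ‖v‖ ^ 2 * ∑ i, p i ^ 2) := by
        grw [Finset.sum_mul_sq_le_sq_mul_sq, sum_sq_le_card_mul_norm_sq v]
    _ = A * ‖v‖ ^ 2 * ∑ i, p i ^ 2 := by field_simp
    _ ≤ ‖p‖ ^ 2 * h * ∑ i, p i ^ 2 := by gcongr
    _ ≤ (∑ i, p i ^ 2) * h * ∑ i, p i ^ 2 := by grw [norm_sq_le_sum_sq p]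
    _ = (∑ i, p i ^ 2) ^ 2 * h := by ring

end Euclidean

/-- Coercivity of the anisotropic operator along the
hyperplane: there are `A₀, P > 0` with
`|p|⁴ · F̄(p−e₀) · D²F̄|_{p−e₀}(v,v) ≥ A₀ ⟨v,p⟩²` for all `p, v` in the
coordinate hyperplane with `F̄(p) ≥ P`. -/
theorem anisotropic_coercivity_hyperplane
    (n : ℕ) (hn : 1 ≤ n)
    (F : (Fin (n + 1) → ℝ) → ℝ)
    (hF_hom : ∀ l : ℝ, 0 < l → ∀ ω : Fin (n + 1) → ℝ, F (l • ω) = l * F ω)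
    (hF_pos : ∀ ω : Fin (n + 1) → ℝ, ω ≠ 0 → 0 < F ω)
    (hF_C2 : ContDiffOn ℝ 2 F {(0 : Fin (n + 1) → ℝ)}ᶜ)
    (hF_conv : ∀ ω : Fin (n + 1) → ℝ, ω ≠ 0 → ∀ r : Fin (n + 1) → ℝ,
      (∀ cc : ℝ, r ≠ cc • ω) → 0 < fderiv ℝ (fderiv ℝ F) ω r r) :
    ∃ A₀ P : ℝ, 0 < A₀ ∧ 0 < P ∧
      ∀ p v : Fin (n + 1) → ℝ,
        p 0 = 0 → v 0 = 0 → P ≤ F p →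
        A₀ * (∑ i, v i * p i) ^ 2 ≤
          (∑ i, p i ^ 2) ^ 2 *
            (F (p - (Pi.single 0 1 : Fin (n + 1) → ℝ)) *
              fderiv ℝ (fderiv ℝ F) (p - (Pi.single 0 1 : Fin (n + 1) → ℝ)) v v) := by
  obtain ⟨A, hA, h_coercive⟩ := anisotropic_coercivity_hyperplane_general
    ⟨hF_hom, hF_pos, hF_C2, hF_conv⟩ (H := LinearMap.ker (LinearMap.proj 0))
    (e := Pi.single 0 1) (by simp) one_pos
  exact ⟨A / Fintype.card (Fin (n + 1)), 1, by positivity, one_pos, fun p v hp hv hFp =>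
    div_card_mul_sum_mul_sq_le hA.le (h_coercive p hp v hv hFp)⟩
end
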